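/- arXiv:1812.07473 — 2 statements merged into one kernel-verified Lean document; each statement's English description precedes it below -/
import Mathlib

section
/- For each d ∈ ℕ there is a constant c(d) > 0 such that for every F ∈ 𝔉_d^s and all k, n ∈ ℕ one has ρ(F^n, F^{n+2k}) ≤ c(d) · k · n^{−1}. -/
open MeasureTheory RealInnerProductSpace
open scoped ENNReal

noncomputable section

abbrev Euc (d : ℕ) := EuclideanSpace ℝ (Fin d)

/-- Convolution of two measures on an additive structure. -/
def mconv {α : Type*} [MeasurableSpace α] [Add α] (μ ν : Measure α) : Measure α :=
  (μ.prod ν).map (fun p => p.1 + p.2)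

/-- Convolution power `μ^{*n}`, with `μ^{*0}` the Dirac measure at `0`. -/
def convPow {α : Type*} [MeasurableSpace α] [AddMonoid α] (μ : Measure α) : ℕ → Measure α
  | 0 => Measure.dirac 0
  | n + 1 => mconv (convPow μ n) μ

/-- Convolution product of a finite family of measures. -/
def convProd {α : Type*} [MeasurableSpace α] [AddMonoid α] :
    ∀ {n : ℕ}, (Fin n → Measure α) → Measure α
  | 0, _ => Measure.dirac 0
  | n + 1, G => mconv (convProd (fun i : Fin n => G i.castSucc)) (G (Fin.last n))

/-- The compound Poisson measure `e(a·μ) = e^{-a} ∑_k a^k μ^{*k}/k!`. -/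
def cpois {α : Type*} [MeasurableSpace α] [AddMonoid α] (a : ℝ) (μ : Measure α) : Measure α :=
  Measure.sum fun k : ℕ =>
    (ENNReal.ofReal (Real.exp (-a) * a ^ k / k.factorial)) • convPow μ k

/-- A measure is symmetric if it is invariant under `x ↦ -x`. -/
def IsSymmMeasure {d : ℕ} (μ : Measure (Euc d)) : Prop :=
  μ.map (fun x => -x) = μ

/-- Characteristic function of a measure on `ℝ^d`. -/
def charFn {d : ℕ} (μ : Measure (Euc d)) (t : Euc d) : ℂ :=
  ∫ x, Complex.exp ((⟪t, x⟫ : ℂ) * Complex.I) ∂μ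

/-- Characteristic function of a measure on `ℝ`. -/
def charFn1 (μ : Measure ℝ) (t : ℝ) : ℂ :=
  ∫ x, Complex.exp (((t * x : ℝ) : ℂ) * Complex.I) ∂μ

/-- Convex polyhedra determined by the directions `t 1, …, t m`. -/
def polyhedraOn {d m : ℕ} (t : Fin m → Euc d) : Set (Set (Euc d)) :=
  {X | ∃ a b : Fin m → EReal,
    X = {x | ∀ j, a j ≤ ((⟪x, t j⟫ : ℝ) : EReal) ∧ ((⟪x, t j⟫ : ℝ) : EReal) ≤ b j}}

/-- The collection `𝔛_m` of convex polyhedra determined by `m` pairs of parallel hyperplanes. -/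
def polyhedra (d m : ℕ) : Set (Set (Euc d)) :=
  {X | ∃ t : Fin m → Euc d, X ∈ polyhedraOn t}

/-- The distance `ρ_m(G,H) = sup_{X ∈ 𝔛_m} |G{X} - H{X}|`. -/
def rhoPoly {d : ℕ} (m : ℕ) (G H : Measure (Euc d)) : ℝ :=
  ⨆ X ∈ polyhedra d m, |(G X).toReal - (H X).toReal|

/-- The Lévy concentration function `Q(μ, b) = sup_x μ[x, x+b]`. -/
def concFn (μ : Measure ℝ) (b : ℝ) : ℝ :=
  ⨆ x : ℝ, (μ (Set.Icc x (x + b))).toReal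

/-- `q(H, X) = inf_{‖t‖=1} Q(𝓛(⟨ξ,t⟩), λ{⟨x,t⟩ : x ∈ X})` where `H = 𝓛(ξ)`. -/
def qFn {d : ℕ} (H : Measure (Euc d)) (X : Set (Euc d)) : ℝ :=
  ⨅ t ∈ {t : Euc d | ‖t‖ = 1},
    concFn (H.map fun x => ⟪x, t⟫) (volume ((fun x => ⟪x, t⟫) '' X)).toReal

/-- The uniform (Kolmogorov) distance on `ℝ^d`. -/
def kolmDist {d : ℕ} (G H : Measure (Euc d)) : ℝ :=
  ⨆ x : Euc d, |(G {y | ∀ i, y i ≤ x i}).toReal - (H {y | ∀ i, y i ≤ x i}).toReal|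

/-- The uniform (Kolmogorov) distance on `ℝ`. -/
def kolmDist1 (G H : Measure ℝ) : ℝ :=
  ⨆ x : ℝ, |(G (Set.Iic x)).toReal - (H (Set.Iic x)).toReal|

end


/-- staircase rectangle bound predicate -/
def RB {Ω : Type} [Fintype Ω] [DecidableEq Ω] (Φ : Ω → Ω → ℝ) (C e : ℝ) : Prop :=
  ∀ A B : Finset Ω, |∑ s ∈ A, ∑ t ∈ B, Φ s t| ≤
    C * (Fintype.card Ω : ℝ) * ((A.card : ℝ) / Fintype.card Ω) ^ e * (√(A.card : ℝ) * √(B.card : ℝ))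

lemma bit_sum (m : ℕ) : ∀ u v : ℕ, u < 2 ^ m → v < 2 ^ m →
    (∑ j ∈ Finset.range m, if (u / 2 ^ j % 2 = 0 ∧ v / 2 ^ j = u / 2 ^ j + 1) then (1 : ℝ) else 0)
      = if u < v then 1 else 0 := by
  induction m with
  | zero => intro u v hu hv; simp at hu hv; simp [hu, hv]
  | succ m ih =>
    intro u v hu hv
    rw [Finset.sum_range_succ']
    have h := ih (u / 2) (v / 2) (by rw [pow_succ] at hu; omega) (by rw [pow_succ] at hv; omega)
    simp only [Nat.div_div_eq_div_mul, ← pow_succ'] at h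
    rw [h]
    simp only [pow_zero, Nat.div_one]
    split_ifs <;> first | omega | norm_num

lemma l_sum (x y m : ℕ) (hx : x < m) :
    (∑ l ∈ Finset.range m, if (x = 2 * l ∧ y = 2 * l + 1) then (1 : ℝ) else 0)
      = if (x % 2 = 0 ∧ y = x + 1) then (1 : ℝ) else 0 := by
  by_cases h : x % 2 = 0 ∧ y = x + 1
  · rw [if_pos h, Finset.sum_eq_single (x / 2)]
    · rw [if_pos]; omega
    · intro b _ hb; rw [if_neg]; omega
    · intro hb; simp at hb; omega
  · rw [if_neg h]
    apply Finset.sum_eq_zero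
    intro b _; rw [if_neg]; omega

lemma cell_card {Ω : Type} (A : Finset Ω) (u : Ω → ℕ) (hu : Function.Injective u) (j l : ℕ) :
    (A.filter (fun s => u s / 2 ^ j = l)).card ≤ 2 ^ j := by
  classical
  have : (A.filter (fun s => u s / 2 ^ j = l)).card ≤ (Finset.Ico (l * 2 ^ j) (l * 2 ^ j + 2 ^ j)).card := by
    apply Finset.card_le_card_of_injOn u
    · intro s hs
      simp only [Finset.coe_filter, Set.mem_ofPred_eq] at hs
      simp only [Finset.coe_Ico, Set.mem_Ico]
      have h1 := Nat.div_add_mod (u s) (2 ^ j)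
      have h2 := Nat.mod_lt (u s) (show 0 < 2 ^ j by positivity)
      rw [hs.2, mul_comm] at h1
      omega
    · exact hu.injOn
  simpa using this

lemma cells_card {Ω : Type} (A : Finset Ω) (f : Ω → ℕ) (g : ℕ → ℕ) (hg : Function.Injective g) (m : ℕ) :
    ∑ l ∈ Finset.range m, ((A.filter (fun s => f s = g l)).card : ℝ) ≤ A.card := by
  classical
  rw [← Nat.cast_sum, Nat.cast_le]
  rw [← Finset.card_biUnion]
  · apply Finset.card_le_card
    intro s hs
    simp only [Finset.mem_biUnion, Finset.mem_filter] at hs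
    obtain ⟨_, _, h, _⟩ := hs; exact h
  · intro a _ b _ hab
    rw [Function.onFun, Finset.disjoint_filter]
    intro s _ h1 h2
    exact hab (hg (h1.symm.trans h2))

lemma RB_step {Ω : Type} [Fintype Ω] [DecidableEq Ω] (N : ℕ) (hK : Fintype.card Ω = 2 ^ N)
    (Φ : Ω → Ω → ℝ) (C e : ℝ) (hC : 0 ≤ C) (he : 0 < e) (h : RB Φ C e) (u v : Ω → ℕ)
    (hu : Function.Injective u) (hu2 : ∀ s, u s < 2 ^ N) (hv : ∀ s, v s ≤ 2 ^ N) :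
    RB (fun s t => Φ s t * if u s < v t then 1 else 0)
      (C * (1 - (2 : ℝ) ^ (-(e / 2)))⁻¹) (e / 2) := by
  intro A B
  set K : ℝ := (Fintype.card Ω : ℝ) with hKdef
  have hKe : K = 2 ^ N := by rw [hKdef, hK]; push_cast; rfl
  have hKpos : 0 < K := by rw [hKe]; positivity
  set α : ℝ := (A.card : ℝ) / K with hα
  have hα0 : 0 ≤ α := by positivity
  set r : ℝ := (2 : ℝ) ^ (-(e / 2)) with hr
  have hr0 : 0 < r := by positivity
  have hr1 : r < 1 := Real.rpow_lt_one_of_one_lt_of_neg (by norm_num) (by linarith)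
  obtain ⟨AA, hAA⟩ : ∃ AA : ℕ → ℕ → Finset Ω, ∀ j l, AA j l = A.filter (fun s => u s / 2 ^ j = 2 * l) :=
    ⟨_, fun _ _ => rfl⟩
  obtain ⟨BB, hBB⟩ : ∃ BB : ℕ → ℕ → Finset Ω, ∀ j l, BB j l = B.filter (fun s => v s / 2 ^ j = 2 * l + 1) :=
    ⟨_, fun _ _ => rfl⟩
  have key : ∑ s ∈ A, ∑ t ∈ B, Φ s t * (if u s < v t then 1 else 0)
      = ∑ j ∈ Finset.range (N + 1), ∑ l ∈ Finset.range (2 ^ N),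
          ∑ s ∈ AA j l, ∑ t ∈ BB j l, Φ s t := by
    have e1 : ∀ s t, (if u s < v t then (1 : ℝ) else 0) = ∑ j ∈ Finset.range (N + 1),
        ∑ l ∈ Finset.range (2 ^ N), (if u s / 2 ^ j = 2 * l then 1 else 0) * (if v t / 2 ^ j = 2 * l + 1 then 1 else 0) := by
      intro s t
      rw [← bit_sum (N + 1) (u s) (v t) (by have := hu2 s; rw [pow_succ]; omega)
        (by have := hv t; have : 0 < 2 ^ N := by positivity
            rw [pow_succ]; omega)]
      apply Finset.sum_congr rfl
      intro j _
      rw [← l_sum _ _ (2 ^ N) (lt_of_le_of_lt (Nat.div_le_self _ _) (hu2 s))]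
      apply Finset.sum_congr rfl
      intro l _
      split_ifs <;> simp_all
    simp only [e1, Finset.mul_sum]
    simp only [hAA, hBB, Finset.sum_filter]
    have : ∀ s ∈ A, ∑ t ∈ B, ∑ j ∈ Finset.range (N + 1), ∑ l ∈ Finset.range (2 ^ N),
        Φ s t * ((if u s / 2 ^ j = 2 * l then 1 else 0) * (if v t / 2 ^ j = 2 * l + 1 then 1 else 0))
        = ∑ j ∈ Finset.range (N + 1), ∑ l ∈ Finset.range (2 ^ N), ∑ t ∈ B,
        Φ s t * ((if u s / 2 ^ j = 2 * l then 1 else 0) * (if v t / 2 ^ j = 2 * l + 1 then 1 else 0)) := by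
      intro s _
      rw [Finset.sum_comm]
      apply Finset.sum_congr rfl
      intro j _
      rw [Finset.sum_comm]
    rw [Finset.sum_congr rfl this, Finset.sum_comm]
    apply Finset.sum_congr rfl
    intro j _
    rw [Finset.sum_comm]
    apply Finset.sum_congr rfl
    intro l _
    apply Finset.sum_congr rfl
    intro s _
    by_cases hs : u s / 2 ^ j = 2 * l
    · simp [hs]
    · simp [hs]
  rw [key]
  have cell : ∀ j ∈ Finset.range (N + 1), |∑ l ∈ Finset.range (2 ^ N), ∑ s ∈ AA j l, ∑ t ∈ BB j l, Φ s t|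
      ≤ C * K * α ^ (e / 2) * (√(A.card : ℝ) * √(B.card : ℝ)) * r ^ (N - j) := by
    intro j hj
    have hj' : j ≤ N := by simp at hj; omega
    have hb : ∀ l, |∑ s ∈ AA j l, ∑ t ∈ BB j l, Φ s t| ≤
        C * K * (α ^ (e / 2) * r ^ (N - j)) * (√((AA j l).card : ℝ) * √((BB j l).card : ℝ)) := by
      intro l
      refine (h (AA j l) (BB j l)).trans ?_
      have h1 : (((AA j l).card : ℝ) / K) ≤ α := by
        rw [hα, hAA]; gcongr; exact Finset.filter_subset _ _
      have h2 : (((AA j l).card : ℝ) / K) ≤ (2 : ℝ)⁻¹ ^ (N - j) := by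
        have : ((AA j l).card : ℝ) ≤ 2 ^ j := by rw [hAA]; exact_mod_cast cell_card A u hu j (2 * l)
        rw [div_le_iff₀ hKpos, hKe]
        refine this.trans (le_of_eq ?_)
        obtain ⟨i, rfl⟩ := Nat.exists_eq_add_of_le hj'
        rw [Nat.add_sub_cancel_left, pow_add, inv_pow]; field_simp
      have h0 : 0 ≤ (((AA j l).card : ℝ) / K) := by positivity
      have h3 : (((AA j l).card : ℝ) / K) ^ e ≤ α ^ (e / 2) * r ^ (N - j) := by
        have : e = e / 2 + e / 2 := by ring
        conv_lhs => rw [this, Real.rpow_add_of_nonneg h0 (by linarith) (by linarith)]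
        have h4 : r ^ (N - j) = ((2 : ℝ)⁻¹ ^ (N - j)) ^ (e / 2) := by
          rw [hr, ← Real.rpow_natCast, ← Real.rpow_natCast, ← Real.rpow_mul (by norm_num),
            ← Real.rpow_mul (by norm_num), Real.inv_rpow (by norm_num), ← Real.rpow_neg (by norm_num)]
          congr 1; ring
        rw [h4]
        exact mul_le_mul (Real.rpow_le_rpow h0 h1 (by linarith)) (Real.rpow_le_rpow h0 h2 (by linarith))
          (Real.rpow_nonneg h0 _) (Real.rpow_nonneg hα0 _)
      rw [← hKdef]
      exact mul_le_mul_of_nonneg_right (mul_le_mul_of_nonneg_left h3 (mul_nonneg hC hKpos.le))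
        (by positivity)
    calc _ ≤ ∑ l ∈ Finset.range (2 ^ N), |∑ s ∈ AA j l, ∑ t ∈ BB j l, Φ s t| := Finset.abs_sum_le_sum_abs _ _
      _ ≤ ∑ l ∈ Finset.range (2 ^ N), C * K * (α ^ (e / 2) * r ^ (N - j)) * (√((AA j l).card : ℝ) * √((BB j l).card : ℝ)) :=
        Finset.sum_le_sum (fun l _ => hb l)
      _ = C * K * (α ^ (e / 2) * r ^ (N - j)) * ∑ l ∈ Finset.range (2 ^ N), (√((AA j l).card : ℝ) * √((BB j l).card : ℝ)) := by
        rw [Finset.mul_sum]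
      _ ≤ C * K * (α ^ (e / 2) * r ^ (N - j)) * (√(A.card : ℝ) * √(B.card : ℝ)) := by
        refine mul_le_mul_of_nonneg_left ?_ (mul_nonneg (mul_nonneg hC hKpos.le)
          (mul_nonneg (Real.rpow_nonneg hα0 _) (pow_nonneg hr0.le _)))
        refine (Real.sum_sqrt_mul_sqrt_le _ (fun _ => by positivity) (fun _ => by positivity)).trans ?_
        refine mul_le_mul (Real.sqrt_le_sqrt ?_) (Real.sqrt_le_sqrt ?_) (Real.sqrt_nonneg _) (Real.sqrt_nonneg _)
        · simp only [hAA]; exact cells_card A _ (fun l => 2 * l) (fun a b hab => by simpa using hab) _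
        · simp only [hBB]; exact cells_card B _ (fun l => 2 * l + 1) (fun a b hab => by simpa using hab) _
      _ = _ := by ring
  calc _ ≤ ∑ j ∈ Finset.range (N + 1), |∑ l ∈ Finset.range (2 ^ N), ∑ s ∈ AA j l, ∑ t ∈ BB j l, Φ s t| :=
        Finset.abs_sum_le_sum_abs _ _
    _ ≤ ∑ j ∈ Finset.range (N + 1), C * K * α ^ (e / 2) * (√(A.card : ℝ) * √(B.card : ℝ)) * r ^ (N - j) :=
        Finset.sum_le_sum cell
    _ = C * K * α ^ (e / 2) * (√(A.card : ℝ) * √(B.card : ℝ)) * ∑ j ∈ Finset.range (N + 1), r ^ (N - j) := by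
        rw [Finset.mul_sum]
    _ ≤ C * K * α ^ (e / 2) * (√(A.card : ℝ) * √(B.card : ℝ)) * (1 - r)⁻¹ := by
        refine mul_le_mul_of_nonneg_left ?_ (mul_nonneg (mul_nonneg (mul_nonneg hC hKpos.le)
          (Real.rpow_nonneg hα0 _)) (by positivity))
        have := Finset.sum_range_reflect (fun i => r ^ i) (N + 1)
        simp only [Nat.add_sub_cancel] at this
        have e2 : ∑ j ∈ Finset.range (N + 1), r ^ (N - j) = ∑ j ∈ Finset.range (N + 1), r ^ j := by
          rw [← this]
        rw [e2, ← tsum_geometric_of_lt_one hr0.le hr1]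
        exact (summable_geometric_of_lt_one hr0.le hr1).sum_le_tsum _ (fun _ _ => by positivity)
    _ = _ := by ring

lemma exists_rank {Ω : Type} [Fintype Ω] [DecidableEq Ω] (p : Ω → ℝ) :
    ∃ u : Ω → ℕ, Function.Injective u ∧ (∀ s, u s < Fintype.card Ω) ∧
      ∀ t s, p s ≤ t ↔ u s < Fintype.card {i // p i ≤ t} := by
  let e := Fintype.equivFin Ω
  let f : Fin (Fintype.card Ω) → ℝ := fun i => p (e.symm i)
  refine ⟨fun s => ((Tuple.sort f).symm (e s) : ℕ), ?_, fun s => Fin.is_lt _, ?_⟩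
  · intro a b hab
    have := Fin.ext hab
    simpa using this
  · intro t s
    have h := Tuple.lt_card_le_iff_apply_le_of_monotone (f := f ∘ Tuple.sort f) (a := t)
      (Tuple.monotone_sort f) (j := (Tuple.sort f).symm (e s))
    have hc : Fintype.card {i // p i ≤ t} = Fintype.card {i // (f ∘ Tuple.sort f) i ≤ t} := by
      apply Fintype.card_congr
      refine Equiv.subtypeEquiv (e.trans (Tuple.sort f).symm) ?_
      intro a; simp [f]
    rw [hc, Fintype.card_subtype, h]; simp [f]

lemma RB_multi (d : ℕ) (C e : ℝ) (hC : 0 < C) (he : 0 < e) : ∃ C' : ℝ, 0 < C' ∧ ∃ e' : ℝ, 0 < e' ∧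
    ∀ (Ω : Type) [Fintype Ω] [DecidableEq Ω] (N : ℕ) (_ : Fintype.card Ω = 2 ^ N) (Φ : Ω → Ω → ℝ)
      (_ : RB Φ C e) (p q : Fin d → Ω → ℝ),
      RB (fun s t => Φ s t * if ∀ i, p i s ≤ q i t then 1 else 0) C' e' := by
  induction d with
  | zero =>
    refine ⟨C, hC, e, he, ?_⟩
    intro Ω _ _ N hK Φ h p q
    simpa using h
  | succ d ih =>
    obtain ⟨C', hC', e', he', H⟩ := ih
    have hr1 : (2 : ℝ) ^ (-(e' / 2)) < 1 := Real.rpow_lt_one_of_one_lt_of_neg (by norm_num) (by linarith)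
    have : 0 < 1 - (2 : ℝ) ^ (-(e' / 2)) := by linarith
    refine ⟨C' * (1 - (2 : ℝ) ^ (-(e' / 2)))⁻¹, by positivity, e' / 2, by positivity, ?_⟩
    intro Ω _ _ N hK Φ h p q
    have h1 := H Ω N hK Φ h (fun i => p i.succ) (fun i => q i.succ)
    obtain ⟨u, hu, hu2, hu3⟩ := exists_rank (p 0)
    have h2 := RB_step N hK _ C' e' hC'.le he' h1 u (fun t => Fintype.card {i // p 0 i ≤ q 0 t}) hu
      (fun s => hK ▸ hu2 s) (fun t => hK ▸ Fintype.card_subtype_le _)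
    convert h2 using 3 with s t
    have h4 : (∀ i, p i s ≤ q i t) ↔ ((∀ i : Fin d, p i.succ s ≤ q i.succ t) ∧
        u s < Fintype.card {i // p 0 i ≤ q 0 t}) := by
      rw [Fin.forall_fin_succ, hu3, and_comm]
    rw [mul_assoc]
    congr 1
    by_cases h5 : ∀ i : Fin d, p i.succ s ≤ q i.succ t <;>
      by_cases h6 : u s < Fintype.card {i // p 0 i ≤ q 0 t}
    · rw [if_pos (h4.2 ⟨h5, h6⟩), if_pos h5, if_pos h6, mul_one]
    · rw [if_neg (fun h => h6 (h4.1 h).2), if_neg h6, mul_zero]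
    · rw [if_neg (fun h => h5 (h4.1 h).1), if_neg h5, zero_mul]
    · rw [if_neg (fun h => h5 (h4.1 h).1), if_neg h5, zero_mul]

/-- sign cube -/
abbrev Cube (N : ℕ) := Fin N → ℤˣ

/-- real value of a sign -/
def sg (s : ℤˣ) : ℝ := ((s : ℤ) : ℝ)

lemma sg_one : sg 1 = 1 := by simp [sg]
lemma sg_neg_one : sg (-1) = -1 := by simp [sg]
lemma sg_mul (s t : ℤˣ) : sg (s * t) = sg s * sg t := by simp [sg]
lemma sg_self (s : ℤˣ) : sg s * sg s = 1 := by
  rcases Int.units_eq_one_or s with h | h <;> simp [h, sg]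
lemma sg_abs (s : ℤˣ) : |sg s| = 1 := by
  rcases Int.units_eq_one_or s with h | h <;> simp [h, sg]

/-- Walsh character -/
noncomputable def chi {N : ℕ} (T : Finset (Fin N)) (s : Cube N) : ℝ := ∏ i ∈ T, sg (s i)

lemma chi_mul {N : ℕ} (T : Finset (Fin N)) (s t : Cube N) : chi T (s * t) = chi T s * chi T t := by
  simp [chi, sg_mul, Finset.prod_mul_distrib]

lemma chi_abs {N : ℕ} (T : Finset (Fin N)) (s : Cube N) : |chi T s| = 1 := by
  simp [chi, Finset.abs_prod, sg_abs]

lemma chi_self {N : ℕ} (T : Finset (Fin N)) (s : Cube N) : chi T s * chi T s = 1 := by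
  rw [← abs_mul_abs_self, chi_abs, mul_one]

lemma chi_orth {N : ℕ} (s t : Cube N) :
    ∑ T : Finset (Fin N), chi T s * chi T t = if s = t then (2 : ℝ) ^ N else 0 := by
  have h : ∑ T : Finset (Fin N), chi T s * chi T t = ∏ i : Fin N, (1 + sg (s i) * sg (t i)) := by
    rw [Finset.prod_one_add]
    rw [Finset.powerset_univ]
    simp [chi, Finset.prod_mul_distrib]
  rw [h]
  split_ifs with hst
  · subst hst; simp [sg_self]; norm_num
  · obtain ⟨i, hi⟩ := Function.ne_iff.mp hst
    apply Finset.prod_eq_zero (Finset.mem_univ i)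
    rcases Int.units_eq_one_or (s i) with h1 | h1 <;> rcases Int.units_eq_one_or (t i) with h2 | h2
    · rw [h1, h2] at hi; simp at hi
    · simp [h1, h2, sg]
    · simp [h1, h2, sg]
    · rw [h1, h2] at hi; simp at hi

lemma card_cube (N : ℕ) : Fintype.card (Cube N) = 2 ^ N := by
  simp [Cube]

lemma bessel {N : ℕ} (g : Cube N → ℝ) :
    ∑ T : Finset (Fin N), (∑ s, g s * chi T s) ^ 2 = 2 ^ N * ∑ s, g s ^ 2 := by
  calc _ = ∑ T : Finset (Fin N), ∑ s, ∑ t, g s * g t * (chi T s * chi T t) := by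
        apply Finset.sum_congr rfl; intro T _
        rw [sq, Finset.sum_mul_sum]
        apply Finset.sum_congr rfl; intro s _
        apply Finset.sum_congr rfl; intro t _
        ring
    _ = ∑ s, ∑ t, g s * g t * ∑ T : Finset (Fin N), (chi T s * chi T t) := by
        rw [Finset.sum_comm]
        apply Finset.sum_congr rfl; intro s _
        rw [Finset.sum_comm]
        apply Finset.sum_congr rfl; intro t _
        rw [Finset.mul_sum]
    _ = _ := by
        simp only [chi_orth, mul_ite, mul_zero, Finset.sum_ite_eq, Finset.mem_univ, if_true]
        rw [Finset.mul_sum]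
        apply Finset.sum_congr rfl; intro s _; ring

lemma inversion {N : ℕ} (f : Cube N → ℝ) (s : Cube N) :
    2 ^ N * f s = ∑ T : Finset (Fin N), (∑ t, f t * chi T t) * chi T s := by
  calc _ = ∑ t, f t * ∑ T : Finset (Fin N), (chi T t * chi T s) := by
        simp only [chi_orth, mul_ite, mul_zero, Finset.sum_ite_eq', Finset.mem_univ, if_true]
        ring
    _ = _ := by
        simp only [Finset.mul_sum, Finset.sum_mul]
        rw [Finset.sum_comm]
        apply Finset.sum_congr rfl; intro s _
        apply Finset.sum_congr rfl; intro t _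
        ring

lemma sum_cube_succ {N : ℕ} (f : Cube (N + 1) → ℝ) :
    ∑ s, f s = ∑ s : Cube N, (f (Fin.cons 1 s) + f (Fin.cons (-1) s)) := by
  rw [← (Fin.consEquiv (fun _ => ℤˣ)).sum_comp, Fintype.sum_prod_type, Finset.sum_add_distrib]
  have : (Finset.univ : Finset ℤˣ) = {1, -1} := by decide
  rw [this, Finset.sum_pair (by decide)]
  rfl

lemma moments (N : ℕ) : ∀ w : Fin N → ℝ,
    (∑ s : Cube N, (∑ i, w i * sg (s i)) ^ 2 = 2 ^ N * ∑ i, w i ^ 2) ∧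
    (∑ s : Cube N, (∑ i, w i * sg (s i)) ^ 4 ≤ 2 ^ N * (3 * (∑ i, w i ^ 2) ^ 2)) := by
  induction N with
  | zero => intro w; simp
  | succ N ih =>
    intro w
    obtain ⟨h1, h2⟩ := ih (fun i => w i.succ)
    have hc : ∑ s : Cube N, (1 : ℝ) = 2 ^ N := by simp
    constructor
    · rw [sum_cube_succ]
      simp only [Fin.sum_univ_succ, Fin.cons_zero, Fin.cons_succ, sg_one, sg_neg_one]
      have : ∀ Y : ℝ, (w 0 * 1 + Y) ^ 2 + (w 0 * -1 + Y) ^ 2 = 2 * w 0 ^ 2 * 1 + 2 * Y ^ 2 := by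
        intro Y; ring
      simp only [this, Finset.sum_add_distrib, ← Finset.mul_sum, h1, hc]
      ring
    · rw [sum_cube_succ]
      simp only [Fin.sum_univ_succ, Fin.cons_zero, Fin.cons_succ, sg_one, sg_neg_one]
      have : ∀ Y : ℝ, (w 0 * 1 + Y) ^ 4 + (w 0 * -1 + Y) ^ 4 = 2 * w 0 ^ 4 * 1 + 12 * w 0 ^ 2 * Y ^ 2 + 2 * Y ^ 4 := by
        intro Y; ring
      simp only [this, Finset.sum_add_distrib, ← Finset.mul_sum, h1, hc]
      have h3 : 0 ≤ (2 : ℝ) ^ N * w 0 ^ 4 := by positivity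
      rw [pow_succ (2 : ℝ) N]
      nlinarith

lemma level_one {N : ℕ} (A : Finset (Cube N)) (g : Cube N → ℝ) (hg : ∀ s, |g s| ≤ 1) :
    ∑ i, (∑ s ∈ A, g s * sg (s i)) ^ 2 ≤ 7 * (2 ^ N) ^ 2 * (√((A.card : ℝ) / 2 ^ N)) ^ 3 := by
  set w : Fin N → ℝ := fun i => ∑ s ∈ A, g s * sg (s i) with hw
  set W := ∑ i, w i ^ 2 with hW
  have hW0 : 0 ≤ W := by positivity
  set K : ℝ := 2 ^ N with hK
  have hK0 : 0 < K := by positivity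
  set a : ℝ := (A.card : ℝ) with ha
  have ha0 : 0 ≤ a := by positivity
  have e1 : W = ∑ s ∈ A, g s * ∑ i, w i * sg (s i) := by
    simp only [Finset.mul_sum]
    rw [Finset.sum_comm, hW]
    apply Finset.sum_congr rfl; intro i _
    rw [sq]; nth_rw 2 [hw]
    simp only [Finset.mul_sum]
    apply Finset.sum_congr rfl; intro s _
    ring
  have e2 : ∀ l : ℝ, 0 < l → W ≤ a * l + K * (3 * W ^ 2) / l ^ 3 := by
    intro l hl
    rw [e1]
    calc _ ≤ ∑ s ∈ A, (l + (∑ i, w i * sg (s i)) ^ 4 / l ^ 3) := by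
          apply Finset.sum_le_sum; intro s _
          set Y := ∑ i, w i * sg (s i)
          have h1 : g s * Y ≤ |Y| := by
            calc g s * Y ≤ |g s * Y| := le_abs_self _
              _ = |g s| * |Y| := abs_mul _ _
              _ ≤ 1 * |Y| := by gcongr; exact hg s
              _ = |Y| := one_mul _
          refine h1.trans ?_
          by_cases hY : |Y| ≤ l
          · have : 0 ≤ Y ^ 4 / l ^ 3 := by positivity
            linarith
          · push Not at hY
            have : |Y| ≤ Y ^ 4 / l ^ 3 := by
              rw [le_div_iff₀ (by positivity)]
              have : Y ^ 4 = |Y| * |Y| ^ 3 := by rw [← pow_succ', Even.pow_abs (by decide)]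
              rw [this]; gcongr
            linarith
      _ = a * l + (∑ s ∈ A, (∑ i, w i * sg (s i)) ^ 4) / l ^ 3 := by
          rw [Finset.sum_add_distrib, Finset.sum_div]; simp [ha]
      _ ≤ a * l + (K * (3 * W ^ 2)) / l ^ 3 := by
          gcongr
          refine le_trans ?_ (moments N w).2
          apply Finset.sum_le_univ_sum_of_nonneg
          intro s; positivity
      _ ≤ _ := by rw [← e1]
  rcases hW0.eq_or_lt with h0 | h0
  · rw [← h0]; positivity
  rcases ha0.eq_or_lt with h1 | h1
  · exfalso
    have : A = ∅ := by 
      have h2 : (A.card : ℝ) = 0 := h1.symm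
      rw [← Finset.card_eq_zero]; exact_mod_cast h2
    rw [e1, this] at h0; simp at h0
  have h3 := e2 (W / (2 * a)) (by positivity)
  have h4 : W ^ 2 ≤ 48 * K * a ^ 3 := by
    have : a * (W / (2 * a)) = W / 2 := by field_simp
    rw [this] at h3
    have h5 : K * (3 * W ^ 2) / (W / (2 * a)) ^ 3 = 24 * K * a ^ 3 / W := by field_simp; ring
    rw [h5] at h3
    have h6 : W / 2 ≤ 24 * K * a ^ 3 / W := by linarith
    rw [le_div_iff₀ h0] at h6
    nlinarith
  refine (pow_le_pow_iff_left₀ hW0 (by positivity) two_ne_zero).1 ?_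
  refine h4.trans ?_
  have h7 : √(a / K) ^ 2 = a / K := Real.sq_sqrt (by positivity)
  have h8 : (7 * K ^ 2 * √(a / K) ^ 3) ^ 2 = 49 * K * a ^ 3 := by
    calc _ = 49 * K ^ 4 * (√(a / K) ^ 2) ^ 3 := by ring
      _ = _ := by rw [h7]; field_simp
  rw [h8]
  have : 0 ≤ K * a ^ 3 := by positivity
  linarith

/-- number of plus signs -/
def kk {N : ℕ} (s : Cube N) : ℕ := (Finset.univ.filter (fun i => s i = 1)).card

lemma sum_sg {N : ℕ} (s : Cube N) : ∑ i, sg (s i) = 2 * (kk s : ℝ) - N := by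
  have h : ∀ i, sg (s i) = 2 * (if s i = 1 then (1 : ℝ) else 0) - 1 := by
    intro i
    rcases Int.units_eq_one_or (s i) with h | h <;> (simp [h, sg]; try norm_num)
  simp only [h, Finset.sum_sub_distrib, ← Finset.mul_sum]
  simp [kk]

/-- balanced sign vectors -/
def Bal (m : ℕ) : Finset (Cube (2 * (m + 1))) := Finset.univ.filter (fun s => kk s = m + 1)

lemma mem_bal {m : ℕ} (s : Cube (2 * (m + 1))) : s ∈ Bal m ↔ kk s = m + 1 := by simp [Bal]

lemma card_bal (m : ℕ) : (Bal m).card = (m + 1).centralBinom := by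
  have : (Bal m).card = (Finset.powersetCard (m + 1) (Finset.univ : Finset (Fin (2 * (m + 1))))).card := by
    apply Finset.card_nbij' (fun s => Finset.univ.filter (fun i => s i = 1))
      (fun T i => if i ∈ T then 1 else -1)
    · intro s hs
      have := (mem_bal s).1 hs
      simpa [kk, Finset.mem_powersetCard] using this
    · intro T hT
      have hT := (Finset.mem_powersetCard.1 hT).2
      refine (mem_bal _).2 ?_
      have : ∀ i, ((if i ∈ T then (1 : ℤˣ) else -1) = 1) ↔ i ∈ T := by
        intro i; split_ifs with h <;> simp [h]
      simp [kk, this, hT]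
    · intro s _
      funext i
      rcases Int.units_eq_one_or (s i) with h | h <;> simp [h]
    · intro T _
      ext i
      by_cases h : i ∈ T <;> simp [h]
  rw [this, Finset.card_powersetCard, Finset.card_univ, Fintype.card_fin, Nat.centralBinom]

lemma bal_pos (m : ℕ) : (0 : ℝ) < (Bal m).card := by
  rw [card_bal]; exact_mod_cast Nat.centralBinom_pos _

lemma bal_ratio (m : ℕ) : (2 : ℝ) ^ (2 * (m + 1)) / (Bal m).card ≤ (2 * (m + 1) : ℕ) := by
  rw [div_le_iff₀ (bal_pos m), card_bal, pow_mul]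
  have := Nat.four_pow_le_two_mul_self_mul_centralBinom (m + 1) (by omega)
  norm_num only
  exact_mod_cast this

/-- flip one coordinate -/
def flp {N : ℕ} (i : Fin N) : Cube N := Pi.mulSingle i (-1)

lemma flp_self {N : ℕ} (i : Fin N) : flp i * flp i = 1 := by
  unfold flp; rw [← Pi.mulSingle_mul]; simp

lemma sg_flp {N : ℕ} (s : Cube N) (i j : Fin N) :
    sg ((s * flp i) j) = if j = i then - sg (s j) else sg (s j) := by
  rw [Pi.mul_apply, sg_mul]
  split_ifs with h
  · subst h; simp [flp, sg_neg_one]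
  · simp [flp, h, sg_one]

lemma kk_flp {N : ℕ} (s : Cube N) (i : Fin N) : (kk (s * flp i) : ℝ) = kk s - sg (s i) := by
  have h1 := sum_sg (s * flp i)
  have h2 := sum_sg s
  have h3 : ∑ j, sg ((s * flp i) j) = ∑ j, sg (s j) - 2 * sg (s i) := by
    have : ∀ j, sg ((s * flp i) j) = sg (s j) - if j = i then 2 * sg (s j) else 0 := by
      intro j; rw [sg_flp]; split_ifs <;> ring
    simp only [this, Finset.sum_sub_distrib, Finset.sum_ite_eq', Finset.mem_univ, if_true]
  linarith

lemma chi_flp {N : ℕ} (T : Finset (Fin N)) (s : Cube N) (i : Fin N) :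
    chi T (s * flp i) = chi T s - if i ∈ T then 2 * chi T s else 0 := by
  rw [chi_mul]
  have : chi T (flp i) = if i ∈ T then -1 else 1 := by
    have h : ∀ j, sg (flp i j) = if j = i then -1 else 1 := by
      intro j
      by_cases h : j = i
      · subst h; simp [flp, sg_neg_one]
      · simp [flp, h, sg_one]
    simp only [chi, h]
    rw [Finset.prod_ite_eq' T i (fun _ => (-1 : ℝ))]
  rw [this]; split_ifs <;> ring

/-- the extremal multiplier -/
noncomputable def phi (m : ℕ) (s : Cube (2 * (m + 1))) : ℝ :=
  2 ^ (2 * (m + 1)) / (Bal m).card * ∑ i, if s * flp i ∈ Bal m then - sg (s i) else 0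

lemma phi_abs (m : ℕ) (s : Cube (2 * (m + 1))) : |phi m s| ≤ ((2 * (m + 1) : ℕ) : ℝ) ^ 2 := by
  rw [phi, abs_mul, sq]
  have hb := bal_pos m
  refine mul_le_mul ?_ ?_ (abs_nonneg _) (by positivity)
  · rw [abs_of_nonneg (by positivity)]; exact bal_ratio m
  · refine (Finset.abs_sum_le_sum_abs _ _).trans ?_
    calc _ ≤ ∑ i : Fin (2 * (m + 1)), (1 : ℝ) := by
          apply Finset.sum_le_sum; intro i _
          split_ifs
          · rw [abs_neg, sg_abs]
          · simp
      _ = _ := by simp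

lemma sum_phi (m : ℕ) (g : Cube (2 * (m + 1)) → ℝ) :
    ∑ s, phi m s * g s = 2 ^ (2 * (m + 1)) / (Bal m).card *
      ∑ s ∈ Bal m, ∑ i, sg (s i) * g (s * flp i) := by
  simp only [phi, mul_assoc, ← Finset.mul_sum, Finset.sum_mul]
  congr 1
  rw [Finset.sum_comm, Finset.sum_comm (s := Bal m)]
  apply Finset.sum_congr rfl; intro i _
  rw [← Equiv.sum_comp (Equiv.mulRight (flp i))]
  have : Bal m = Finset.univ.filter (fun s => s ∈ Bal m) := by simp
  conv_rhs => rw [this]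
  rw [Finset.sum_filter]
  apply Finset.sum_congr rfl; intro s _
  simp only [Equiv.coe_mulRight, mul_assoc s, flp_self, mul_one, sg_flp, if_true, neg_neg, ite_mul, zero_mul]

lemma sum_phi_kk (m : ℕ) (u : ℕ → ℝ) :
    ∑ s, phi m s * u (kk s) = 2 ^ (2 * (m + 1)) * ((m + 1) * (u m - u (m + 2))) := by
  rw [sum_phi]
  have : ∀ s ∈ Bal m, ∑ i, sg (s i) * u (kk (s * flp i)) = (m + 1) * (u m - u (m + 2)) := by
    intro s hs
    rw [mem_bal] at hs
    have h : ∀ i, sg (s i) * u (kk (s * flp i)) = (u m - u (m+2)) / 2 + sg (s i) * ((u m + u (m + 2)) / 2) := by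
      intro i
      have h1 := kk_flp s i
      rcases Int.units_eq_one_or (s i) with h | h
      · rw [h, sg_one, hs] at h1
        push_cast at h1
        have : kk (s * flp i) = m := by
          have : (kk (s * flp i) : ℝ) = m := by linarith
          exact_mod_cast this
        rw [this, h, sg_one]; ring
      · rw [h, sg_neg_one, hs] at h1
        push_cast at h1
        have : kk (s * flp i) = m + 2 := by
          have : (kk (s * flp i) : ℝ) = m + 2 := by linarith
          exact_mod_cast this
        rw [this, h, sg_neg_one]; ring
    simp only [h, Finset.sum_add_distrib, ← Finset.sum_mul, sum_sg, hs]
    simp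
    ring
  rw [Finset.sum_congr rfl this, Finset.sum_const, nsmul_eq_mul]
  have := bal_pos m
  field_simp

/-- Fourier transform of the balanced layer -/
noncomputable def cc (m : ℕ) (T : Finset (Fin (2 * (m + 1)))) : ℝ := ∑ s ∈ Bal m, chi T s

lemma chi_sg_mem {N : ℕ} (T : Finset (Fin N)) (s : Cube N) (i : Fin N) (h : i ∈ T) :
    chi T s * sg (s i) = chi (T.erase i) s := by
  rw [chi, ← Finset.mul_prod_erase T _ h, chi, mul_comm, ← mul_assoc, sg_self, one_mul]

lemma chi_sg_not_mem {N : ℕ} (T : Finset (Fin N)) (s : Cube N) (i : Fin N) (h : i ∉ T) :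
    chi T s * sg (s i) = chi (insert i T) s := by
  rw [chi, chi, Finset.prod_insert h, mul_comm]

lemma bal_sum {m : ℕ} {s : Cube (2 * (m + 1))} (hs : s ∈ Bal m) : ∑ i, sg (s i) = 0 := by
  rw [sum_sg, (mem_bal s).1 hs]; push_cast; ring

lemma phihat (m : ℕ) (T : Finset (Fin (2 * (m + 1)))) :
    ∑ s, phi m s * chi T s = 2 ^ (2 * (m + 1)) / (Bal m).card * (-2 * ∑ i ∈ T, cc m (T.erase i)) := by
  rw [sum_phi]
  congr 1
  simp only [cc]
  rw [Finset.sum_comm (s := T), Finset.mul_sum]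
  apply Finset.sum_congr rfl; intro s hs
  simp only [chi_flp, mul_sub, Finset.sum_sub_distrib, ← Finset.sum_mul, bal_sum hs, zero_mul, zero_sub]
  simp only [mul_ite, mul_zero, Finset.sum_ite_mem, Finset.univ_inter]
  rw [neg_mul, Finset.mul_sum]
  congr 1
  apply Finset.sum_congr rfl; intro i hi
  rw [← chi_sg_mem T s i hi]; ring

lemma cc_rec (m : ℕ) (T : Finset (Fin (2 * (m + 1)))) :
    ∑ i ∈ T, cc m (T.erase i) + ∑ i ∈ Tᶜ, cc m (insert i T) = 0 := by
  have h : ∑ s ∈ Bal m, chi T s * ∑ i, sg (s i) = 0 := by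
    apply Finset.sum_eq_zero; intro s hs; rw [bal_sum hs, mul_zero]
  rw [← h]
  simp only [cc]
  rw [Finset.sum_comm (s := T), Finset.sum_comm (s := Tᶜ), ← Finset.sum_add_distrib]
  apply Finset.sum_congr rfl; intro s hs
  rw [← Finset.sum_add_sum_compl T (fun i => sg (s i)), mul_add (chi T s), Finset.mul_sum, Finset.mul_sum]
  congr 1
  · apply Finset.sum_congr rfl; intro i hi
    rw [chi_sg_mem T s i hi]
  · apply Finset.sum_congr rfl; intro i hi
    rw [chi_sg_not_mem T s i (Finset.mem_compl.1 hi)]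

lemma cc_card (m : ℕ) (T T' : Finset (Fin (2 * (m + 1)))) (h : T.card = T'.card) :
    cc m T = cc m T' := by
  obtain ⟨e⟩ : Nonempty ({x // x ∈ T} ≃ {x // x ∈ T'}) :=
    Fintype.card_eq.1 (by simpa using h)
  let E := e.extendSubtype
  have hE : T.map E.toEmbedding = T' := by
    apply Finset.eq_of_subset_of_card_le
    · intro x hx
      simp only [Finset.mem_map, Equiv.coe_toEmbedding] at hx
      obtain ⟨y, hy, rfl⟩ := hx
      exact e.extendSubtype_mem y hy
    · simp [h]
  rw [← hE]
  unfold cc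
  apply Finset.sum_nbij' (fun s i => s (E.symm i)) (fun s i => s (E i))
  · intro s hs
    rw [mem_bal] at hs ⊢
    refine Eq.trans ?_ hs
    rw [kk, kk]
    apply Finset.card_bij (fun i _ => E.symm i)
    · simp
    · simp
    · intro b hb; refine ⟨E b, ?_, by simp⟩; simpa using hb
  · intro s hs
    rw [mem_bal] at hs ⊢
    refine Eq.trans ?_ hs
    rw [kk, kk]
    apply Finset.card_bij (fun i _ => E i)
    · simp
    · simp
    · intro b hb; refine ⟨E.symm b, ?_, by simp⟩; simpa using hb
  · intro s _; funext i; simp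
  · intro s _; funext i; simp
  · intro s _
    simp [chi, Finset.prod_map]

/-- odd factorial products -/
noncomputable def OO (n : ℕ) : ℝ := ∏ i ∈ Finset.range (n + 1), (2 * (i : ℝ) + 1)

lemma OO_succ (n : ℕ) : OO (n + 1) = (2 * n + 3) * OO n := by
  rw [OO, Finset.prod_range_succ, OO]; push_cast; ring

lemma OO_pos (n : ℕ) : 0 < OO n := by unfold OO; positivity
lemma OO_zero : OO 0 = 1 := by simp [OO]

lemma OO_mul (a b : ℕ) : OO (a + 1) * OO (b + 1) ≤ 3 * OO (a + b + 1) := by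
  induction b with
  | zero => rw [OO_succ 0, OO_zero, add_zero]; push_cast; linarith
  | succ b ih =>
    rw [OO_succ (b + 1), ← add_assoc a b 1, OO_succ (a + b + 1)]
    have h1 := OO_pos (a + b + 1)
    have h2 := OO_pos (a + 1)
    have h3 := OO_pos (b + 1)
    push_cast
    calc _ = (2 * ((b : ℝ) + 1) + 3) * (OO (a + 1) * OO (b + 1)) := by ring
      _ ≤ (2 * ((b : ℝ) + 1) + 3) * (3 * OO (a + b + 1)) := by gcongr
      _ ≤ (2 * ((a : ℝ) + b + 1) + 3) * (3 * OO (a + b + 1)) := by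
        gcongr; have : (0 : ℝ) ≤ a := by positivity
        linarith
      _ = _ := by ring

lemma gam_exists (m : ℕ) : ∃ γ : ℕ → ℝ, (∀ T, cc m T = γ T.card) ∧
    (∀ t ≤ 2 * (m + 1), (t : ℝ) * γ (t - 1) + (2 * (m + 1) - t) * γ (t + 1) = 0) := by
  obtain ⟨γ, hγ⟩ : ∃ γ : ℕ → ℝ, ∀ T, cc m T = γ T.card := by
    classical
    refine ⟨fun t => if h : ∃ T : Finset (Fin (2 * (m + 1))), T.card = t then cc m h.choose else 0, ?_⟩
    intro T
    have h : ∃ T' : Finset (Fin (2 * (m + 1))), T'.card = T.card := ⟨T, rfl⟩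
    simp only [dif_pos h]
    exact cc_card m _ _ h.choose_spec.symm
  refine ⟨γ, hγ, ?_⟩
  intro t ht
  obtain ⟨T, _, hT⟩ := Finset.exists_subset_card_eq (s := (Finset.univ : Finset (Fin (2 * (m + 1))))) (n := t)
    (by simpa using ht)
  rw [← cc_rec m T]
  congr 1
  · rw [Finset.sum_congr rfl (fun i hi => by rw [hγ, Finset.card_erase_of_mem hi, hT])]
    simp [hT]
  · rw [Finset.sum_congr rfl (fun i hi => by rw [hγ, Finset.card_insert_of_notMem (Finset.mem_compl.1 hi), hT])]
    rw [Finset.sum_const, nsmul_eq_mul, Finset.card_compl, hT, Fintype.card_fin, Nat.cast_sub ht]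
    push_cast; rfl

lemma phihat_bound (m : ℕ) (hm : 0 < m) (T : Finset (Fin (2 * (m + 1)))) :
    |∑ s, phi m s * chi T s| ≤ 2 ^ (2 * (m + 1)) *
      (if T.card = 1 ∨ T.card = 2 * m + 1 then 2 else 6 / (2 * (m : ℝ) + 1)) := by
  obtain ⟨γ, h1, h2⟩ := gam_exists m
  have hb := bal_pos m
  have h0 : γ 0 = (Bal m).card := by
    have := h1 ∅
    simp [cc, chi] at this
    exact this.symm
  have hodd : ∀ j ≤ m, γ (2 * j + 1) = 0 := by
    intro j
    induction j with
    | zero =>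
      intro _
      have := h2 0 (by omega)
      simp at this
      rcases this with h | h
      · exfalso
        have : (0 : ℝ) < (m : ℝ) + 1 := by positivity
        linarith
      · simpa using h
    | succ j ih =>
      intro hj
      have h3 := h2 (2 * j + 2) (by omega)
      rw [show 2 * j + 2 - 1 = 2 * j + 1 by omega, ih (by omega)] at h3
      push_cast at h3
      rw [mul_zero, zero_add] at h3
      rcases mul_eq_zero.1 h3 with h | h
      · exfalso
        have : ((j : ℝ) + 1) ≤ m := by exact_mod_cast hj
        linarith
      · exact h
  have heven : ∀ j ≤ m, OO m * ((2 * (j : ℝ) + 1) * |γ (2 * j)|) = (Bal m).card * (OO j * OO (m - j)) := by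
    intro j
    induction j with
    | zero =>
      intro _
      simp [h0, OO_zero]; ring
    | succ j ih =>
      intro hj
      have h3 := h2 (2 * j + 1) (by omega)
      rw [show 2 * j + 1 - 1 = 2 * j by omega] at h3
      push_cast at h3
      have hjm : ((j : ℝ) + 1) ≤ m := by exact_mod_cast hj
      have h4 : (2 * (j : ℝ) + 1) * |γ (2 * j)| = (2 * (m : ℝ) - 2 * j + 1) * |γ (2 * j + 1 + 1)| := by
        have h5 : (2 * (j : ℝ) + 1) * γ (2 * j) = - ((2 * (m : ℝ) - 2 * j + 1) * γ (2 * j + 1 + 1)) := by linarith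
        have h6 := congrArg abs h5
        rw [abs_neg, abs_mul, abs_mul, abs_of_nonneg (show (0 : ℝ) ≤ 2 * (j : ℝ) + 1 by positivity),
          abs_of_nonneg (show (0 : ℝ) ≤ 2 * (m : ℝ) - 2 * j + 1 by linarith)] at h6
        exact h6
      have h7 := ih (by omega)
      obtain ⟨q, rfl⟩ := Nat.exists_eq_add_of_le hj
      rw [h4, show j + 1 + q - j = q + 1 by omega, OO_succ q] at h7
      rw [show j + 1 + q - (j + 1) = q by omega, OO_succ j, show 2 * (j + 1) = 2 * j + 1 + 1 by ring]
      push_cast at h7 ⊢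
      have h8 : (0 : ℝ) < 2 * q + 3 := by positivity
      apply mul_left_cancel₀ h8.ne'
      linear_combination (2 * (j : ℝ) + 3) * h7
  have hev : ∀ j ≤ m, (2 * (j : ℝ) + 1) * |γ (2 * j)| = (Bal m).card * (OO j * OO (m - j)) / OO m := by
    intro j hj
    rw [← heven j hj]; field_simp [(OO_pos m).ne']
  rw [phihat]
  have hs : ∑ i ∈ T, cc m (T.erase i) = T.card * γ (T.card - 1) := by
    rw [Finset.sum_congr rfl (fun i hi => by rw [h1, Finset.card_erase_of_mem hi])]
    simp
  rw [hs]
  have hTc : T.card ≤ 2 * (m + 1) := by simpa using Finset.card_le_univ T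
  suffices H : |(T.card : ℝ) * γ (T.card - 1)| ≤ (Bal m).card * ((if T.card = 1 ∨ T.card = 2 * m + 1 then 2 else 6 / (2 * (m : ℝ) + 1)) / 2) by
    rw [abs_mul, abs_mul, abs_of_nonneg (by positivity)]
    rw [div_mul_eq_mul_div, div_le_iff₀ hb]
    have : |(-2 : ℝ)| = 2 := by norm_num
    rw [this]
    have h9 : (0 : ℝ) < 2 ^ (2 * (m + 1)) := by positivity
    calc _ ≤ (2 : ℝ) ^ (2 * (m + 1)) * (2 * ((Bal m).card * ((if T.card = 1 ∨ T.card = 2 * m + 1 then 2 else 6 / (2 * (m : ℝ) + 1)) / 2))) := by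
          gcongr
      _ = _ := by ring
  have hnn : (0 : ℝ) ≤ (if T.card = 1 ∨ T.card = 2 * m + 1 then 2 else 6 / (2 * (m : ℝ) + 1)) := by
    split_ifs <;> positivity
  rcases Nat.even_or_odd' T.card with ⟨j, hj | hj⟩
  · rcases Nat.eq_zero_or_pos j with hj0 | hj0
    · rw [hj, hj0]; simp; positivity
    · have : γ (T.card - 1) = 0 := by
        rw [show T.card - 1 = 2 * (j - 1) + 1 by omega]
        exact hodd _ (by omega)
      rw [this]; simp only [mul_zero, abs_zero]; positivity
  · have hjm : j ≤ m := by omega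
    rw [hj, Nat.add_sub_cancel, abs_mul]
    push_cast
    rw [abs_of_nonneg (by positivity), hev j hjm, mul_div_assoc]
    refine mul_le_mul_of_nonneg_left ?_ hb.le
    rw [div_le_iff₀ (OO_pos m)]
    split_ifs with hc
    · rcases hc with hc | hc
      · have : j = 0 := by omega
        subst this; simp [OO_zero]
      · have : j = m := by omega
        subst this; simp [OO_zero]
    · obtain ⟨a, rfl⟩ : ∃ a, j = a + 1 := ⟨j - 1, by omega⟩
      obtain ⟨b, hb'⟩ : ∃ b, m - (a + 1) = b + 1 := ⟨m - (a + 1) - 1, by omega⟩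
      have hm' : m = a + b + 1 + 1 := by omega
      rw [hb']
      refine (OO_mul a b).trans ?_
      rw [hm', OO_succ (a + b + 1)]
      push_cast
      apply le_of_eq
      have : (0 : ℝ) < 2 * (a + b + 1 + 1) + 1 := by positivity
      field_simp
      ring

lemma w_split (m : ℕ) (T : Finset (Fin (2 * (m + 1)))) :
    (if T.card = 1 ∨ T.card = 2 * m + 1 then 2 else 6 / (2 * (m : ℝ) + 1)) ≤
      2 * (∑ i, if T = {i} then (1 : ℝ) else 0) + 2 * (∑ i, if T = Finset.univ.erase i then (1 : ℝ) else 0)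
        + 6 / (2 * (m : ℝ) + 1) := by
  have n1 : 0 ≤ ∑ i, if T = {i} then (1 : ℝ) else 0 := Finset.sum_nonneg (fun i _ => by split_ifs <;> norm_num)
  have n2 : 0 ≤ ∑ i, if T = Finset.univ.erase i then (1 : ℝ) else 0 :=
    Finset.sum_nonneg (fun i _ => by split_ifs <;> norm_num)
  have n3 : 0 ≤ 6 / (2 * (m : ℝ) + 1) := by positivity
  split_ifs with h
  · rcases h with h | h
    · obtain ⟨i, hi⟩ := Finset.card_eq_one.1 h
      have : 1 ≤ ∑ i, if T = {i} then (1 : ℝ) else 0 := by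
        refine le_trans ?_ (Finset.single_le_sum (f := fun i => if T = {i} then (1 : ℝ) else 0)
          (fun i _ => by split_ifs <;> norm_num) (Finset.mem_univ i))
        simp [hi]
      linarith
    · have hc : Tᶜ.card = 1 := by rw [Finset.card_compl, h, Fintype.card_fin]; omega
      obtain ⟨i, hi⟩ := Finset.card_eq_one.1 hc
      have hT : T = Finset.univ.erase i := by
        rw [← compl_compl T, hi]; ext; simp
      have : 1 ≤ ∑ i, if T = Finset.univ.erase i then (1 : ℝ) else 0 := by
        refine le_trans ?_ (Finset.single_le_sum (f := fun i => if T = Finset.univ.erase i then (1 : ℝ) else 0)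
          (fun i _ => by split_ifs <;> norm_num) (Finset.mem_univ i))
        simp [hT]
      linarith
  · linarith

lemma cs_abs {ι : Type} (S : Finset ι) (f g : ι → ℝ) (P Q : ℝ) (hP : ∑ i ∈ S, f i ^ 2 ≤ P)
    (hQ : ∑ i ∈ S, g i ^ 2 ≤ Q) : ∑ i ∈ S, |f i * g i| ≤ √P * √Q := by
  have := Real.sum_mul_le_sqrt_mul_sqrt S (fun i => |f i|) (fun i => |g i|)
  simp only [sq_abs, ← abs_mul] at this
  refine this.trans ?_
  gcongr

lemma rect (m : ℕ) (hm : 0 < m) :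
    RB (fun s t : Cube (2 * (m + 1)) => phi m (s * t)) 40 (1 / 6) := by
  intro A B
  rw [card_cube (2 * (m + 1))]
  push_cast
  set K : ℝ := 2 ^ (2 * (m + 1)) with hK
  have hK0 : 0 < K := by positivity
  clear_value K
  set α : ℝ := (A.card : ℝ) / K with hα
  have hα0 : 0 ≤ α := by positivity
  clear_value α
  have hcard : ∀ S : Finset (Cube (2 * (m + 1))), (S.card : ℝ) ≤ K := by
    intro S
    have : S.card ≤ 2 ^ (2 * (m + 1)) := by rw [← card_cube (2 * (m + 1))]; exact Finset.card_le_univ S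
    rw [hK]; exact_mod_cast this
  have hα1 : α ≤ 1 := by rw [hα, div_le_one hK0]; exact hcard A
  set y : ℝ := α ^ (1 / 6 : ℝ) with hy
  have hy0 : 0 ≤ y := Real.rpow_nonneg hα0 _
  have hy1 : y ≤ 1 := Real.rpow_le_one hα0 hα1 (by norm_num)
  have hy6 : y ^ 6 = α := by
    rw [hy, ← Real.rpow_natCast, ← Real.rpow_mul hα0]; norm_num
  clear_value y
  clear hy
  set z : ℝ := √((B.card : ℝ) / K) with hz
  have hz0 : 0 ≤ z := Real.sqrt_nonneg _
  have hz2 : z ^ 2 = (B.card : ℝ) / K := Real.sq_sqrt (by positivity)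
  have hz1 : z ≤ 1 := by
    rw [hz]; apply Real.sqrt_le_one.2 ; rw [div_le_one hK0]; exact hcard B
  clear_value z
  have hA : (A.card : ℝ) = K * y ^ 6 := by rw [hy6, hα]; field_simp
  have hB : (B.card : ℝ) = K * z ^ 2 := by rw [hz2, ← mul_div_assoc, mul_div_cancel_left₀ _ hK0.ne']
  have hsa : √α = y ^ 3 := by
    rw [← hy6, show y ^ 6 = (y ^ 3) ^ 2 by ring, Real.sqrt_sq (by positivity)]
  have hAB : √(A.card : ℝ) * √(B.card : ℝ) = K * y ^ 3 * z := by
    rw [← Real.sqrt_mul (Nat.cast_nonneg _), hA, hB,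
      show K * y ^ 6 * (K * z ^ 2) = (K * y ^ 3 * z) ^ 2 by ring, Real.sqrt_sq (by positivity)]
  rw [hAB]
  obtain ⟨Nr, hNr0⟩ : ∃ Nr : ℝ, Nr = ((2 * (m + 1) : ℕ) : ℝ) := ⟨_, rfl⟩
  have hNr : Nr = 2 * m + 2 := by rw [hNr0]; push_cast; ring
  have hNr1 : 0 ≤ Nr := by rw [hNr]; positivity
  have hm1 : (1 : ℝ) ≤ m := by exact_mod_cast hm
  rcases lt_or_ge (y * Nr) 1 with hc | hc
  · -- small set
    calc |∑ s ∈ A, ∑ t ∈ B, phi m (s * t)| ≤ ∑ s ∈ A, ∑ t ∈ B, Nr ^ 2 := by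
          refine (Finset.abs_sum_le_sum_abs _ _).trans (Finset.sum_le_sum fun s _ => ?_)
          refine (Finset.abs_sum_le_sum_abs _ _).trans (Finset.sum_le_sum fun t _ => ?_)
          rw [hNr0]; exact phi_abs m (s * t)
      _ = A.card * (B.card * Nr ^ 2) := by simp
      _ = K ^ 2 * y ^ 4 * z * ((y * Nr) ^ 2 * z) := by rw [hA, hB]; ring
      _ ≤ K ^ 2 * y ^ 4 * z * 1 := by
          gcongr
          have : (y * Nr) ^ 2 ≤ 1 := pow_le_one₀ (by positivity) hc.le
          nlinarith
      _ ≤ 40 * K * y * (K * y ^ 3 * z) := by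
          have : 0 ≤ K ^ 2 * y ^ 4 * z := by positivity
          nlinarith
  · set a : Finset (Fin (2 * (m + 1))) → ℝ := fun T => ∑ s ∈ A, chi T s with ha
    set b : Finset (Fin (2 * (m + 1))) → ℝ := fun T => ∑ s ∈ B, chi T s with hb
    have hbes : ∀ S : Finset (Cube (2 * (m + 1))), ∑ T : Finset (Fin (2 * (m + 1))), (∑ s ∈ S, chi T s) ^ 2 ≤ K * S.card := by
      intro S
      have h := bessel (fun s => if s ∈ S then (1 : ℝ) else 0)
      simp only [ite_mul, one_mul, zero_mul, Finset.sum_ite_mem, Finset.univ_inter] at h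
      rw [h]
      simp [hK]
    have hl1 : ∀ S : Finset (Cube (2 * (m + 1))), ∑ i, (∑ s ∈ S, chi {i} s) ^ 2 ≤ 7 * K ^ 2 * (√((S.card : ℝ) / K)) ^ 3 := by
      intro S
      have h := level_one S (fun _ => 1) (by simp)
      rw [← hK] at h
      simpa only [chi, Finset.prod_singleton, one_mul] using h
    have hl2 : ∀ S : Finset (Cube (2 * (m + 1))), ∑ i, (∑ s ∈ S, chi (Finset.univ.erase i) s) ^ 2 ≤ 7 * K ^ 2 * (√((S.card : ℝ) / K)) ^ 3 := by
      intro S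
      have h := level_one S (chi Finset.univ) (fun s => (chi_abs _ s).le)
      rw [← hK] at h
      simpa only [chi_sg_mem _ _ _ (Finset.mem_univ _)] using h
    have hfin : √(7 * K ^ 2 * √((A.card : ℝ) / K) ^ 3) * √(7 * K ^ 2 * √((B.card : ℝ) / K) ^ 3) ≤ 7 * K ^ 2 * y ^ 4 * z := by
      rw [← hα, ← hz]
      rw [hsa, ← Real.sqrt_mul (by positivity)]
      apply Real.sqrt_le_iff.2
      refine ⟨by positivity, ?_⟩
      have e : 7 * K ^ 2 * (y ^ 3) ^ 3 * (7 * K ^ 2 * z ^ 3) = (7 * K ^ 2 * y ^ 4 * z) ^ 2 * (y * z) := by ring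
      rw [e]
      have : y * z ≤ 1 := by nlinarith
      exact mul_le_of_le_one_right (by positivity) this
    have r1 : ∑ i, |a {i} * b {i}| ≤ 7 * K ^ 2 * y ^ 4 * z :=
      (cs_abs Finset.univ (fun i => a {i}) (fun i => b {i}) _ _ (hl1 A) (hl1 B)).trans hfin
    have r2 : ∑ i, |a (Finset.univ.erase i) * b (Finset.univ.erase i)| ≤ 7 * K ^ 2 * y ^ 4 * z :=
      (cs_abs Finset.univ (fun i => a (Finset.univ.erase i)) (fun i => b (Finset.univ.erase i)) _ _ (hl2 A) (hl2 B)).trans hfin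
    have r3 : ∑ T, |a T * b T| ≤ K ^ 2 * y ^ 3 * z := by
      refine (cs_abs Finset.univ a b _ _ (hbes A) (hbes B)).trans (le_of_eq ?_)
      rw [← Real.sqrt_mul (mul_nonneg hK0.le (Nat.cast_nonneg _)), hA, hB,
        show K * (K * y ^ 6) * (K * (K * z ^ 2)) = (K ^ 2 * y ^ 3 * z) ^ 2 by ring, Real.sqrt_sq (by positivity)]
    have hR : K * ∑ s ∈ A, ∑ t ∈ B, phi m (s * t) = ∑ T, (∑ s, phi m s * chi T s) * (a T * b T) := by
      calc _ = ∑ s ∈ A, ∑ t ∈ B, ∑ T, (∑ s, phi m s * chi T s) * (chi T s * chi T t) := by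
            simp only [Finset.mul_sum (s := A), Finset.mul_sum (s := B)]
            apply Finset.sum_congr rfl; intro s _
            apply Finset.sum_congr rfl; intro t _
            rw [hK, inversion]
            simp only [chi_mul]
        _ = ∑ s ∈ A, ∑ T, ∑ t ∈ B, (∑ s, phi m s * chi T s) * (chi T s * chi T t) := by
            apply Finset.sum_congr rfl; intro s _
            rw [Finset.sum_comm]
        _ = _ := by
            rw [Finset.sum_comm]
            apply Finset.sum_congr rfl; intro T _
            simp only [ha, hb]
            rw [Finset.sum_mul_sum, Finset.mul_sum]
            apply Finset.sum_congr rfl; intro s _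
            rw [Finset.mul_sum]
    have hab : K * |∑ s ∈ A, ∑ t ∈ B, phi m (s * t)| ≤ K * (2 * (7 * K ^ 2 * y ^ 4 * z) +
        2 * (7 * K ^ 2 * y ^ 4 * z) + 6 / (2 * (m : ℝ) + 1) * (K ^ 2 * y ^ 3 * z)) := by
      rw [← abs_of_pos hK0, ← abs_mul, abs_of_pos hK0, hR]
      calc _ ≤ ∑ T, |(∑ s, phi m s * chi T s) * (a T * b T)| := Finset.abs_sum_le_sum_abs _ _
        _ ≤ ∑ T, K * (2 * (∑ i, if T = {i} then (1 : ℝ) else 0) + 2 * (∑ i, if T = Finset.univ.erase i then (1 : ℝ) else 0)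
            + 6 / (2 * (m : ℝ) + 1)) * |a T * b T| := by
            apply Finset.sum_le_sum; intro T _
            rw [abs_mul]
            refine mul_le_mul_of_nonneg_right ?_ (abs_nonneg _)
            have hp := phihat_bound m hm T
            rw [← hK] at hp
            exact hp.trans (mul_le_mul_of_nonneg_left (w_split m T) hK0.le)
        _ = K * (2 * ∑ T, (∑ i, if T = {i} then (1 : ℝ) else 0) * |a T * b T|
             + 2 * ∑ T, (∑ i, if T = Finset.univ.erase i then (1 : ℝ) else 0) * |a T * b T|
             + 6 / (2 * (m : ℝ) + 1) * ∑ T, |a T * b T|) := by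
            simp only [Finset.mul_sum (s := (Finset.univ : Finset (Finset (Fin (2 * (m + 1)))))), ← Finset.sum_add_distrib]
            apply Finset.sum_congr rfl; intro T _
            ring
        _ = K * (2 * ∑ i, |a {i} * b {i}|
             + 2 * ∑ i, |a (Finset.univ.erase i) * b (Finset.univ.erase i)|
             + 6 / (2 * (m : ℝ) + 1) * ∑ T, |a T * b T|) := by
            have q : ∀ f : Fin (2 * (m + 1)) → Finset (Fin (2 * (m + 1))), ∑ T, (∑ i, if T = f i then (1 : ℝ) else 0) * |a T * b T|
                = ∑ i, |a (f i) * b (f i)| := by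
              intro f
              simp only [Finset.sum_mul]
              rw [Finset.sum_comm]
              apply Finset.sum_congr rfl; intro i _
              simp
            rw [q, q]
        _ ≤ _ := by gcongr
    have hab2 := le_of_mul_le_mul_left hab hK0
    refine hab2.trans ?_
    have h6 : 6 / (2 * (m : ℝ) + 1) ≤ 12 * y := by
      rw [div_le_iff₀ (by positivity)]
      rw [hNr] at hc
      nlinarith
    have h7 : 6 / (2 * (m : ℝ) + 1) * (K ^ 2 * y ^ 3 * z) ≤ 12 * y * (K ^ 2 * y ^ 3 * z) := by gcongr
    linear_combination h7

lemma det_bound (d : ℕ) : ∃ C : ℝ, 0 < C ∧ ∀ (m : ℕ) (_ : 0 < m) (p q : Fin d → Cube (2 * (m + 1)) → ℝ),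
    |∑ s, ∑ t, phi m (s * t) * (if ∀ i, p i s ≤ q i t then (1 : ℝ) else 0)| ≤ C * (2 ^ (2 * (m + 1))) ^ 2 := by
  obtain ⟨C, hC, e, he, H⟩ := RB_multi d 40 (1 / 6) (by norm_num) (by norm_num)
  refine ⟨C, hC, ?_⟩
  intro m hm p q
  have h := H _ _ (card_cube _) _ (rect m hm) p q Finset.univ Finset.univ
  rw [Finset.card_univ, card_cube] at h
  push_cast at h
  rw [div_self (by positivity), Real.one_rpow, Real.mul_self_sqrt (by positivity)] at h
  refine h.trans (le_of_eq (by ring))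

lemma mconv_eq {d : ℕ} (μ ν : Measure (Euc d)) : mconv μ ν = Measure.conv μ ν := rfl

lemma convPow_prob {d : ℕ} (F : Measure (Euc d)) [IsProbabilityMeasure F] (n : ℕ) :
    IsProbabilityMeasure (convPow F n) := by
  induction n with
  | zero => rw [convPow]; infer_instance
  | succ n ih => rw [convPow, mconv_eq]; infer_instance

lemma law_sum {d : ℕ} (F : Measure (Euc d)) [IsProbabilityMeasure F] (hF : IsSymmMeasure F) (N : ℕ) :
    ∀ c : Fin N → ℝ, (∀ i, c i = 1 ∨ c i = -1 ∨ c i = 0) →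
    (Measure.pi (fun _ : Fin N => F)).map (fun a => ∑ i, c i • a i)
      = convPow F ((Finset.univ.filter (fun i => c i ≠ 0)).card) := by
  induction N with
  | zero =>
    intro c _
    simp [convPow]
  | succ N ih =>
    intro c hc
    have h1 := ih (fun i => c i.succ) (fun i => hc i.succ)
    have mp := measurePreserving_piFinSuccAbove (fun _ : Fin (N + 1) => F) 0
    have e1 : (fun a : Fin (N + 1) → Euc d => ∑ i, c i • a i) =
        (fun z : Euc d × Euc d => z.1 + z.2) ∘ (Prod.map (fun y => c 0 • y) (fun a : Fin N → Euc d => ∑ i, c i.succ • a i))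
          ∘ (MeasurableEquiv.piFinSuccAbove (fun _ : Fin (N + 1) => Euc d) 0) := by
      funext a
      simp [Fin.sum_univ_succ, MeasurableEquiv.piFinSuccAbove, Fin.insertNthEquiv, Fin.tail]
    have m1 : Measurable (fun y : Euc d => c 0 • y) := by fun_prop
    have m2 : Measurable (fun a : Fin N → Euc d => ∑ i, c i.succ • a i) := by fun_prop
    have m3 : Measurable (fun z : Euc d × Euc d => z.1 + z.2) := by fun_prop
    rw [e1, ← Measure.map_map m3 ((m1.prodMap m2).comp mp.measurable),
      ← Measure.map_map (m1.prodMap m2) mp.measurable, mp.map_eq,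
      ← Measure.map_prod_map _ _ m1 m2, h1]
    have := convPow_prob F ((Finset.univ.filter (fun i : Fin N => c i.succ ≠ 0)).card)
    rw [Fin.card_filter_univ_succ]
    change Measure.conv (F.map (fun y : Euc d => c 0 • y)) _ = _
    rcases hc 0 with h | h | h
    · rw [if_pos (by rw [h]; norm_num), convPow, mconv_eq, h]
      simp only [one_smul, Measure.map_id']
      rw [Measure.conv_comm]
    · rw [if_pos (by rw [h]; norm_num), convPow, mconv_eq, h]
      have : F.map (fun y : Euc d => (-1 : ℝ) • y) = F := by
        simp only [neg_smul, one_smul]; exact hF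
      rw [this, Measure.conv_comm]
    · rw [if_neg (by rw [h]; norm_num), h]
      simp only [zero_smul, Measure.map_const, measure_univ, one_smul]
      rw [Measure.dirac_zero_conv]

lemma one_step (d : ℕ) : ∃ C : ℝ, 0 < C ∧ ∀ (m : ℕ) (_ : 0 < m) (F : Measure (Euc d)) (_ : IsProbabilityMeasure F)
    (_ : IsSymmMeasure F) (x : Euc d),
    |((convPow F m) {y | ∀ i, y i ≤ x i}).toReal - ((convPow F (m + 2)) {y | ∀ i, y i ≤ x i}).toReal| ≤ C * (m : ℝ)⁻¹ := by
  obtain ⟨C, hC, H⟩ := det_bound d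
  refine ⟨C, hC, ?_⟩
  intro m hm F _ hF x
  set u : ℕ → ℝ := fun n => ((convPow F n) {y | ∀ i, y i ≤ x i}).toReal with hu
  set K : ℝ := 2 ^ (2 * (m + 1)) with hK
  have hK0 : 0 < K := by positivity
  set P := Measure.pi (fun _ : Fin (2 * (m + 1)) => F) with hP
  let p : (Fin (2 * (m + 1)) → Euc d) → Fin d → Cube (2 * (m + 1)) → ℝ :=
    fun a i s => (∑ j, (sg (s j) / 2) * a j i)
  have hmeas : MeasurableSet {y : Euc d | ∀ i, y i ≤ x i} := by
    have : {y : Euc d | ∀ i, y i ≤ x i} = ⋂ i, {y : Euc d | y i ≤ x i} := by ext; simp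
    rw [this]
    exact MeasurableSet.iInter fun i => measurableSet_le (by fun_prop) measurable_const
  have hset : ∀ s t : Cube (2 * (m + 1)), {a | ∀ i, p a i s ≤ x i - p a i t} =
      (fun a : Fin (2 * (m + 1)) → Euc d => ∑ j, ((sg (s j) + sg (t j)) / 2) • a j) ⁻¹' {y | ∀ i, y i ≤ x i} := by
    intro s t
    ext a
    simp only [Set.mem_ofPred_eq, Set.mem_preimage]
    refine forall_congr' fun i => ?_
    have : (∑ j, ((sg (s j) + sg (t j)) / 2) • a j) i = p a i s + p a i t := by
      simp only [p, ← Finset.sum_add_distrib]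
      rw [WithLp.ofLp_sum, Finset.sum_apply]
      apply Finset.sum_congr rfl; intro j _
      simp only [PiLp.smul_apply, smul_eq_mul]; ring
    rw [this, le_sub_iff_add_le]
  have hm2 : ∀ s t : Cube (2 * (m + 1)), Measurable
      (fun a : Fin (2 * (m + 1)) → Euc d => ∑ j, ((sg (s j) + sg (t j)) / 2) • a j) := by
    intro s t; fun_prop
  have hms : ∀ s t : Cube (2 * (m + 1)), MeasurableSet {a | ∀ i, p a i s ≤ x i - p a i t} := by
    intro s t; rw [hset]; exact hm2 s t hmeas
  have hlaw : ∀ s t : Cube (2 * (m + 1)), u (kk (s * t)) =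
      ∫ a, (if ∀ i, p a i s ≤ x i - p a i t then (1 : ℝ) else 0) ∂P := by
    intro s t
    have h1 := law_sum F hF (2 * (m + 1)) (fun j => (sg (s j) + sg (t j)) / 2) (by
      intro j
      rcases Int.units_eq_one_or (s j) with h | h <;> rcases Int.units_eq_one_or (t j) with h' | h' <;>
        simp [h, h', sg] <;> norm_num)
    have h2 : (Finset.univ.filter (fun j => (sg (s j) + sg (t j)) / 2 ≠ 0)).card = kk (s * t) := by
      unfold kk
      congr 1
      ext j
      simp only [Finset.mem_filter, Finset.mem_univ, true_and, Pi.mul_apply]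
      rcases Int.units_eq_one_or (s j) with h | h <;> rcases Int.units_eq_one_or (t j) with h' | h' <;>
        simp [h, h', sg]
    rw [h2] at h1
    have h3 : (fun a => if ∀ i, p a i s ≤ x i - p a i t then (1 : ℝ) else 0) =
        Set.indicator {a | ∀ i, p a i s ≤ x i - p a i t} 1 := by
      funext a; simp [Set.indicator_apply]
    rw [h3, integral_indicator_one (hms s t), hu]
    simp only
    rw [← h1, Measure.map_apply (hm2 s t) hmeas, ← hset, Measure.real]
  have hint : ∀ s t : Cube (2 * (m + 1)),
      Integrable (fun a => phi m (s * t) * (if ∀ i, p a i s ≤ x i - p a i t then (1 : ℝ) else 0)) P := by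
    intro s t
    apply Integrable.const_mul
    have h3 : (fun a => if ∀ i, p a i s ≤ x i - p a i t then (1 : ℝ) else 0) =
        Set.indicator {a | ∀ i, p a i s ≤ x i - p a i t} 1 := by
      funext a; simp [Set.indicator_apply]
    rw [h3]
    exact (integrable_const (1 : ℝ)).indicator (hms s t)
  have key : K * (K * ((m + 1) * (u m - u (m + 2)))) =
      ∫ a, ∑ s, ∑ t, phi m (s * t) * (if ∀ i, p a i s ≤ x i - p a i t then (1 : ℝ) else 0) ∂P := by
    rw [integral_finsetSum _ (fun s _ => integrable_finsetSum _ (fun t _ => hint s t))]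
    have : ∀ s : Cube (2 * (m + 1)), ∫ a, ∑ t, phi m (s * t) * (if ∀ i, p a i s ≤ x i - p a i t then (1 : ℝ) else 0) ∂P
        = K * ((m + 1) * (u m - u (m + 2))) := by
      intro s
      rw [integral_finsetSum _ (fun t _ => hint s t), ← sum_phi_kk m u]
      refine Eq.trans ?_ (Equiv.sum_comp (Equiv.mulLeft s) _)
      apply Finset.sum_congr rfl; intro t _
      rw [integral_const_mul, ← hlaw]
      rfl
    rw [Finset.sum_congr rfl (fun s _ => this s), Finset.sum_const, Finset.card_univ, card_cube, nsmul_eq_mul]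
    push_cast; rfl
  have hb : |K * (K * ((m + 1) * (u m - u (m + 2))))| ≤ C * K ^ 2 := by
    rw [key]
    have := norm_integral_le_of_norm_le_const (μ := P) (C := C * K ^ 2)
      (f := fun a => ∑ s, ∑ t, phi m (s * t) * (if ∀ i, p a i s ≤ x i - p a i t then (1 : ℝ) else 0))
      (Filter.Eventually.of_forall fun a => H m hm (p a) (fun i t => x i - p a i t))
    simpa using this
  have hm0 : (0 : ℝ) < m := by exact_mod_cast hm
  rw [← mul_assoc, abs_mul, abs_of_nonneg (by positivity), ← sq, mul_comm C, abs_mul,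
    abs_of_pos (show (0 : ℝ) < m + 1 by positivity)] at hb
  have hb2 := le_of_mul_le_mul_left hb (by positivity)
  change |u m - u (m + 2)| ≤ _
  rw [← div_eq_mul_inv, le_div_iff₀ hm0]
  have := abs_nonneg (u m - u (m + 2))
  nlinarith

theorem stmt5 :
    ∃ C : ℕ → ℝ, (∀ d, 0 < C d) ∧
      ∀ (d k n : ℕ), 0 < d → 0 < k → 0 < n →
        ∀ F : Measure (Euc d), IsProbabilityMeasure F → IsSymmMeasure F →
          kolmDist (convPow F n) (convPow F (n + 2 * k)) ≤ C d * k * (n : ℝ)⁻¹ := by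
  choose C hC H using one_step
  refine ⟨C, hC, ?_⟩
  intro d k n _ _ hn F hF hs
  have hn0 : (0 : ℝ) < n := by exact_mod_cast hn
  have hCd := hC d
  unfold kolmDist
  refine ciSup_le fun x => ?_
  clear * - H hF hs hn hn0 hCd
  induction k with
  | zero => simp
  | succ k ih =>
    have h1 := H d (n + 2 * k) (by omega) F hF hs x
    have h2 : C d * ((n + 2 * k : ℕ) : ℝ)⁻¹ ≤ C d * (n : ℝ)⁻¹ := by
      gcongr; omega
    have h3 := abs_sub_le ((convPow F n) {y | ∀ i, y i ≤ x i}).toReal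
      ((convPow F (n + 2 * k)) {y | ∀ i, y i ≤ x i}).toReal
      ((convPow F (n + 2 * k + 2)) {y | ∀ i, y i ≤ x i}).toReal
    rw [show n + 2 * (k + 1) = n + 2 * k + 2 by ring]
    push_cast
    linarith
end

section
/- There exist an absolute constant c > 0 and, for each d ∈ ℕ, a constant c(d) > 0 such that for every F ∈ 𝔉_d^s and all k, n ∈ ℕ one has ρ(F^n, F^{n+2k+1}) ≤ c · d · n^{−1/2} + c(d) · k · n^{−1}. -/
open MeasureTheory RealInnerProductSpace
open scoped ENNReal

noncomputable section

namespace St6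

variable {d : ℕ}

def orth (x : Euc d) : Set (Euc d) := {y | ∀ i, y i ≤ x i}

lemma measurableSet_orth (x : Euc d) : MeasurableSet (orth x) := by
  have : orth x = ⋂ i, {y : Euc d | y i ≤ x i} := by ext; simp [orth]
  rw [this]
  exact MeasurableSet.iInter fun i => measurableSet_le (by fun_prop) measurable_const

lemma mconv_eq (μ ν : Measure (Euc d)) : mconv μ ν = Measure.conv μ ν := rfl

instance mconv_prob (μ ν : Measure (Euc d)) [IsProbabilityMeasure μ] [IsProbabilityMeasure ν] :
    IsProbabilityMeasure (mconv μ ν) := by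
  rw [mconv_eq]; infer_instance

instance convPow_prob (μ : Measure (Euc d)) [IsProbabilityMeasure μ] (n : ℕ) :
    IsProbabilityMeasure (convPow μ n) := by
  induction n with
  | zero => simp only [convPow]; infer_instance
  | succ n ih => simp only [convPow]; infer_instance

lemma convPow_add (μ : Measure (Euc d)) [IsProbabilityMeasure μ] (a b : ℕ) :
    convPow μ (a + b) = mconv (convPow μ a) (convPow μ b) := by
  induction b with
  | zero => 
    simp only [convPow, add_zero, mconv_eq]
    rw [Measure.conv_dirac_zero]
  | succ b ih =>
    rw [← add_assoc]
    simp only [convPow, ih, mconv_eq]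
    rw [Measure.conv_assoc]

lemma convPow_one (μ : Measure (Euc d)) [IsProbabilityMeasure μ] : convPow μ 1 = μ := by
  simp only [convPow, mconv_eq]
  rw [Measure.dirac_zero_conv]

lemma convPow_mul (μ : Measure (Euc d)) [IsProbabilityMeasure μ] (s j : ℕ) :
    convPow (convPow μ s) j = convPow μ (s * j) := by
  induction j with
  | zero => simp [convPow]
  | succ j ih => rw [Nat.mul_succ, convPow_add μ, ← ih]; rfl

lemma mconv_symm {μ ν : Measure (Euc d)} [IsProbabilityMeasure μ] [IsProbabilityMeasure ν]
    (hμ : IsSymmMeasure μ) (hν : IsSymmMeasure ν) : IsSymmMeasure (mconv μ ν) := by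
  unfold IsSymmMeasure at *
  unfold mconv
  conv_rhs => rw [← hμ, ← hν]
  rw [Measure.map_prod_map _ _ (by fun_prop) (by fun_prop),
    Measure.map_map (by fun_prop) (by fun_prop), Measure.map_map (by fun_prop) (by fun_prop)]
  congr 1
  ext p : 1
  simp [add_comm]

lemma convPow_symm {μ : Measure (Euc d)} [IsProbabilityMeasure μ] (hμ : IsSymmMeasure μ) (n : ℕ) :
    IsSymmMeasure (convPow μ n) := by
  induction n with
  | zero => 
    simp only [convPow, IsSymmMeasure]
    rw [Measure.map_dirac' (by fun_prop)]; simp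
  | succ n ih => exact mconv_symm ih hμ

lemma mconv_orth (μ ν : Measure (Euc d)) [IsProbabilityMeasure μ] [IsProbabilityMeasure ν]
    (x : Euc d) : (mconv μ ν).real (orth x) = ∫ a, ν.real (orth (x - a)) ∂μ := by
  rw [← integral_indicator_one (measurableSet_orth x), mconv_eq, integral_conv]
  · refine integral_congr_ae (Filter.Eventually.of_forall fun a => ?_)
    simp only
    rw [← integral_indicator_one (measurableSet_orth _)]
    refine integral_congr_ae (Filter.Eventually.of_forall fun y => ?_)
    simp only [Set.indicator, orth, Set.mem_ofPred_eq, Pi.one_apply, PiLp.add_apply, PiLp.sub_apply, le_sub_iff_add_le']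
    congr
  · exact (integrable_const (1:ℝ)).indicator (measurableSet_orth x)

lemma meas_orth_sub (ν : Measure (Euc d)) [IsProbabilityMeasure ν] (x : Euc d) :
    Measurable (fun a => ν.real (orth (x - a))) := by
  have h : MeasurableSet {p : Euc d × Euc d | p.1 + p.2 ∈ orth x} :=
    (measurableSet_orth x).preimage (by fun_prop)
  have := (measurable_measure_prodMk_left (ν := ν) h).ennreal_toReal
  convert this using 2 with a
  rw [measureReal_def]; congr 2
  ext y
  simp [orth, le_sub_iff_add_le']

lemma int_orth_sub (μ ν : Measure (Euc d)) [IsProbabilityMeasure μ] [IsProbabilityMeasure ν]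
    (x : Euc d) : Integrable (fun a => ν.real (orth (x - a))) μ := by
  refine Integrable.of_bound (meas_orth_sub ν x).aestronglyMeasurable 1 (.of_forall fun a => ?_)
  rw [Real.norm_eq_abs, abs_of_nonneg measureReal_nonneg]
  exact measureReal_le_one

end St6

end

noncomputable section
namespace St6
open ProbabilityTheory

variable {d : ℕ}

lemma map_sum_pi (F : Measure (Euc d)) [IsProbabilityMeasure F] (N : ℕ) (s : Finset (Fin N)) :
    (Measure.pi (fun _ : Fin N => F)).map (fun ω => ∑ i ∈ s, ω i) = convPow F s.card := by
  classical
  have hind : iIndepFun (fun (i : Fin N) (ω : Fin N → Euc d) => ω i) (Measure.pi (fun _ : Fin N => F)) :=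
    iIndepFun_pi (X := fun _ => id) (fun i => aemeasurable_id)
  induction s using Finset.induction_on with
  | empty => 
    simp only [Finset.sum_empty, Finset.card_empty, convPow]
    rw [Measure.map_const]; simp
  | insert j s hj ih =>
    have h1 := hind.indepFun_finsetSum_of_notMem (fun i => measurable_pi_apply i) hj
    have h2 := h1.map_add_eq_map_conv_map (by fun_prop) (by fun_prop)
    rw [Finset.card_insert_of_notMem hj]
    simp only [convPow]
    rw [mconv_eq, ← ih]
    have h3 : (Measure.pi (fun _ : Fin N => F)).map (fun ω => ω j) = F :=
      (measurePreserving_eval (fun _ : Fin N => F) j).map_eq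
    rw [h3] at h2
    have h4 : (∑ j ∈ s, fun ω : Fin N → Euc d => ω j) = (fun ω => ∑ i ∈ s, ω i) := by
      ext ω : 1
      simp
    rw [h4] at h2
    rw [← h2]
    congr 1
    ext ω : 1
    simp [Finset.sum_insert hj, add_comm]

lemma kappa_bound (F : Measure (Euc d)) [IsProbabilityMeasure F] (n : ℕ) (g s : Euc d → ℝ)
    (hg : Measurable g) (hs : Measurable s) (hg1 : ∀ y, |g y| ≤ 1) (hs1 : ∀ y, |s y| ≤ 1)
    (hs0 : ∫ y, s y ∂F = 0) :
    ∫ p, g (p.1 + p.2) * s p.2 ∂((convPow F n).prod F) ≤ 1 / Real.sqrt (n + 1) := by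
  classical
  set P := Measure.pi (fun _ : Fin (n+1) => F) with hP
  set I := ∫ p, g (p.1 + p.2) * s p.2 ∂((convPow F n).prod F) with hI
  have hind : iIndepFun (fun (i : Fin (n+1)) (ω : Fin (n+1) → Euc d) => ω i) P :=
    iIndepFun_pi (X := fun _ => id) (fun i => aemeasurable_id)
  have hmp : ∀ j, P.map (fun ω => ω j) = F := fun j =>
    (measurePreserving_eval (fun _ : Fin (n+1) => F) j).map_eq
  have hE : ∀ j, ∫ ω, g (∑ i, ω i) * s (ω j) ∂P = I := by
    intro j
    have h1 := hind.indepFun_finsetSum_of_notMem (fun i => measurable_pi_apply i)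
      (Finset.notMem_erase j Finset.univ)
    have h2 := (indepFun_iff_map_prod_eq_prod_map_map (by fun_prop) (measurable_pi_apply j).aemeasurable).1 h1
    have h4 : P.map (∑ i ∈ Finset.univ.erase j, fun ω : Fin (n+1) → Euc d => ω i) = convPow F n := by
      have := map_sum_pi F (n+1) (Finset.univ.erase j)
      rw [Finset.card_erase_of_mem (Finset.mem_univ j)] at this
      simp only [Finset.card_univ, Fintype.card_fin, Nat.add_sub_cancel] at this
      rw [← this]
      congr 1
      ext ω : 1
      simp
    rw [h4, hmp j] at h2
    rw [hI, ← h2, integral_map (by fun_prop)]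
    · refine integral_congr_ae (.of_forall fun ω => ?_)
      simp only [Finset.sum_apply]
      rw [Finset.sum_erase_add _ _ (Finset.mem_univ j)]
    · exact Measurable.aestronglyMeasurable (by fun_prop)
  set T : (Fin (n+1) → Euc d) → ℝ := fun ω => ∑ j, s (ω j) with hT
  have hTm : Measurable T := by fun_prop
  have hTb : ∀ ω, |T ω| ≤ n + 1 := by
    intro ω
    calc |T ω| ≤ ∑ j : Fin (n+1), |s (ω j)| := Finset.abs_sum_le_sum_abs _ _
      _ ≤ ∑ j : Fin (n+1), 1 := Finset.sum_le_sum fun j _ => hs1 _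
      _ = n + 1 := by simp
  have hsum : ((n:ℝ) + 1) * I = ∫ ω, g (∑ i, ω i) * T ω ∂P := by
    simp only [hT, Finset.mul_sum]
    rw [integral_finsetSum]
    · simp [hE]
    · intro j _
      refine Integrable.of_bound (C := 1) (Measurable.aestronglyMeasurable (by fun_prop)) (.of_forall fun ω => ?_)
      rw [Real.norm_eq_abs, abs_mul]
      exact mul_le_one₀ (hg1 _) (abs_nonneg _) (hs1 _)
  have hT2 : ∫ ω, (T ω)^2 ∂P ≤ n + 1 := by
    have : ∀ ω, (T ω)^2 = ∑ j, ∑ l, s (ω j) * s (ω l) := by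
      intro ω; rw [sq, hT, Finset.sum_mul_sum]
    simp only [this]
    have hInteg : ∀ j l, Integrable (fun ω : Fin (n+1) → Euc d => s (ω j) * s (ω l)) P := by
      intro j l
      refine Integrable.of_bound (C := 1) (Measurable.aestronglyMeasurable (by fun_prop)) (.of_forall fun ω => ?_)
      rw [Real.norm_eq_abs, abs_mul]
      exact mul_le_one₀ (hs1 _) (abs_nonneg _) (hs1 _)
    rw [integral_finsetSum _ (fun j _ => integrable_finsetSum _ fun l _ => hInteg j l)]
    calc _ = ∑ j : Fin (n+1), ∑ l : Fin (n+1), ∫ ω, s (ω j) * s (ω l) ∂P := by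
          refine Finset.sum_congr rfl fun j _ => ?_
          rw [integral_finsetSum _ (fun l _ => hInteg j l)]
      _ ≤ ∑ j : Fin (n+1), ∑ l : Fin (n+1), if l = j then (1:ℝ) else 0 := by
          refine Finset.sum_le_sum fun j _ => Finset.sum_le_sum fun l _ => ?_
          split_ifs with h
          · subst h
            calc _ ≤ ∫ ω, (1:ℝ) ∂P := by
                  refine integral_mono (hInteg l l) (integrable_const _) fun ω => ?_
                  calc _ ≤ |s (ω l) * s (ω l)| := le_abs_self _
                    _ ≤ 1 := by rw [abs_mul]; exact mul_le_one₀ (hs1 _) (abs_nonneg _) (hs1 _)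
              _ = 1 := by simp
          · have h1 := (hind.indepFun (Ne.symm h)).comp hs hs
            have h2 := h1.integral_fun_mul_eq_mul_integral
              (Measurable.aestronglyMeasurable (by fun_prop)) (Measurable.aestronglyMeasurable (by fun_prop))
            simp only [Function.comp] at h2
            rw [h2]
            have : ∫ ω, s (ω j) ∂P = 0 := by
              rw [← hs0, ← hmp j, integral_map (measurable_pi_apply j).aemeasurable hs.aestronglyMeasurable]
            rw [this]; simp
      _ = n + 1 := by simp
  have hpos : (0:ℝ) < n + 1 := by positivity
  set r := Real.sqrt (n+1) with hr
  have hrpos : 0 < r := Real.sqrt_pos.2 hpos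
  have hrr : r * r = n + 1 := Real.mul_self_sqrt hpos.le
  have hT2i : Integrable (fun ω => (T ω)^2) P := by
    refine Integrable.of_bound (C := ((n:ℝ)+1)^2) (Measurable.aestronglyMeasurable (by fun_prop)) (.of_forall fun ω => ?_)
    rw [Real.norm_eq_abs, abs_pow]
    exact pow_le_pow_left₀ (abs_nonneg _) (hTb ω) 2
  have key : ((n:ℝ) + 1) * I ≤ r := by
    rw [hsum]
    calc _ ≤ ∫ ω, (r/2 + (T ω)^2 * (1/(2*r))) ∂P := by
          refine integral_mono ?_ ((integrable_const _).add (hT2i.mul_const _)) fun ω => ?_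
          · refine Integrable.of_bound (C := (n:ℝ)+1) (Measurable.aestronglyMeasurable (by fun_prop)) (.of_forall fun ω => ?_)
            rw [Real.norm_eq_abs, abs_mul]
            calc _ ≤ 1 * ((n:ℝ)+1) := mul_le_mul (hg1 _) (hTb ω) (abs_nonneg _) zero_le_one
              _ = _ := one_mul _
          · calc _ ≤ |g (∑ i, ω i) * T ω| := le_abs_self _
              _ = |g (∑ i, ω i)| * |T ω| := abs_mul _ _
              _ ≤ 1 * |T ω| := by gcongr; exact hg1 _
              _ ≤ _ := by
                have h1 : r/2 + (T ω)^2 * (1/(2*r)) - |T ω| = (r - |T ω|)^2 / (2*r) := by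
                  rw [← sq_abs (T ω)]; field_simp; ring
                have : 0 ≤ (r - |T ω|)^2 / (2*r) := by positivity
                linarith
      _ = r/2 + (∫ ω, (T ω)^2 ∂P) * (1/(2*r)) := by
          rw [integral_add (integrable_const _) (hT2i.mul_const _), integral_mul_const]; simp
      _ ≤ r/2 + (r*r) * (1/(2*r)) := by rw [hrr]; gcongr
      _ = r := by field_simp; ring
  rw [le_div_iff₀ hrpos]
  rw [← hrr] at key
  nlinarith



def sgr (t : ℝ) : ℝ := if 0 < t then 1 else if t < 0 then -1 else 0

def gr (c t : ℝ) : ℝ := if c < t then 1 else 0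

def sg (i : Fin d) (y : Euc d) : ℝ := sgr (y i)

lemma sg_meas (i : Fin d) : Measurable (sg i) := by
  unfold sg sgr
  refine Measurable.ite (measurableSet_lt (by fun_prop) (by fun_prop)) measurable_const
    (Measurable.ite (measurableSet_lt (by fun_prop) (by fun_prop)) measurable_const measurable_const)

lemma sg_abs (i : Fin d) (y : Euc d) : |sg i y| ≤ 1 := by
  unfold sg sgr; split_ifs <;> simp

lemma sg_neg (i : Fin d) (y : Euc d) : sg i (-y) = - sg i y := by
  unfold sg; simp only [PiLp.neg_apply]
  obtain ⟨t, ht⟩ : ∃ t : ℝ, t = y i := ⟨_, rfl⟩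
  rw [← ht]
  unfold sgr
  rcases lt_trichotomy t 0 with h | h | h
  · have h1 : ¬ (0 < t) := not_lt.2 h.le
    have h2 : 0 < -t := by linarith
    simp [h, h1]
  · simp [h]
  · have h1 : ¬ (t < 0) := not_lt.2 h.le
    simp [h, h1]

def gi (i : Fin d) (x : Euc d) (y : Euc d) : ℝ := gr (x i) (y i)

lemma gi_meas (i : Fin d) (x : Euc d) : Measurable (gi i x) := by
  unfold gi gr
  refine Measurable.ite (measurableSet_lt (by fun_prop) (by fun_prop)) measurable_const measurable_const

lemma gi_abs (i : Fin d) (x y : Euc d) : |gi i x y| ≤ 1 := by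
  unfold gi gr; split_ifs <;> simp

lemma cross_pt (i : Fin d) (x a y : Euc d) :
    |gi i x (a + y) - gi i x a| + |gi i x (a - y) - gi i x a| 
      ≤ gi i x (a + y) * sg i y + gi i x (a - y) * sg i (-y) := by
  unfold gi sg; simp only [PiLp.neg_apply, PiLp.add_apply, PiLp.sub_apply]
  obtain ⟨t, ht⟩ : ∃ t : ℝ, t = y i := ⟨_, rfl⟩
  obtain ⟨b, hb⟩ : ∃ t : ℝ, t = a i := ⟨_, rfl⟩
  obtain ⟨c, hc⟩ : ∃ t : ℝ, t = x i := ⟨_, rfl⟩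
  rw [← ht, ← hb, ← hc]
  unfold gr sgr
  simp only [Left.neg_pos_iff, Left.neg_neg_iff]
  rcases lt_trichotomy t 0 with h | h | h
  · have h1 : ¬ (0 < t) := not_lt.2 h.le
    simp only [h, h1, if_true, if_false]
    by_cases u1 : c < b + t <;> by_cases u2 : c < b - t <;> by_cases u3 : c < b <;>
      simp only [u1, u2, u3, if_true, if_false] <;> first | (exfalso; linarith) | norm_num
  · simp [h]
  · have h1 : ¬ (t < 0) := not_lt.2 h.le
    simp only [h, h1, if_true, if_false]
    by_cases u1 : c < b + t <;> by_cases u2 : c < b - t <;> by_cases u3 : c < b <;>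
      simp only [u1, u2, u3, if_true, if_false] <;> first | (exfalso; linarith) | norm_num

lemma int_symm {μ : Measure (Euc d)} (h : IsSymmMeasure μ) (f : Euc d → ℝ)  (hf : Measurable f) :
    ∫ y, f (-y) ∂μ = ∫ y, f y ∂μ := by
  conv_rhs => rw [← h]
  rw [integral_map (by fun_prop) hf.aestronglyMeasurable]

lemma int_prod_symm {μ ν : Measure (Euc d)} [IsProbabilityMeasure μ] [IsProbabilityMeasure ν]
    (h : IsSymmMeasure ν) (f : Euc d × Euc d → ℝ)  (hf : Measurable f) :
    ∫ p, f (p.1, -p.2) ∂(μ.prod ν) = ∫ p, f p ∂(μ.prod ν) := by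
  have : (μ.prod ν).map (Prod.map id (fun x => -x)) = μ.prod ν := by
    rw [← Measure.map_prod_map _ _ (by fun_prop) (by fun_prop), h, Measure.map_id]
  conv_rhs => rw [← this]
  rw [integral_map (by fun_prop) hf.aestronglyMeasurable]
  rfl

lemma cross_bound (F : Measure (Euc d)) [IsProbabilityMeasure F] (hF : IsSymmMeasure F) (n : ℕ)
    (i : Fin d) (x : Euc d) :
    ∫ p, |gi i x (p.1 + p.2) - gi i x p.1| ∂((convPow F n).prod F) ≤ 2 / Real.sqrt (n + 1) := by
  have hgm := gi_meas i x
  have hsm := sg_meas i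
  have hk := kappa_bound F n (gi i x) (sg i) hgm hsm (gi_abs i x) (sg_abs i) (by
    have := int_symm hF (sg i) (sg_meas i)
    simp only [sg_neg, integral_neg] at this
    linarith)
  set Qm := (convPow F n).prod F with hR
  have i1 : Integrable (fun p : Euc d × Euc d => |gi i x (p.1 + p.2) - gi i x p.1|) Qm := by
    refine Integrable.of_bound (C := 2) (Measurable.aestronglyMeasurable (by fun_prop)) (.of_forall fun p => ?_)
    rw [Real.norm_eq_abs, abs_abs]
    have := abs_sub (gi i x (p.1 + p.2)) (gi i x p.1)
    have := gi_abs i x (p.1 + p.2); have := gi_abs i x (p.1); linarith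
  have i2 : Integrable (fun p : Euc d × Euc d => |gi i x (p.1 - p.2) - gi i x p.1|) Qm := by
    refine Integrable.of_bound (C := 2) (Measurable.aestronglyMeasurable (by fun_prop)) (.of_forall fun p => ?_)
    rw [Real.norm_eq_abs, abs_abs]
    have := abs_sub (gi i x (p.1 - p.2)) (gi i x p.1)
    have := gi_abs i x (p.1 - p.2); have := gi_abs i x (p.1); linarith
  have i3 : Integrable (fun p : Euc d × Euc d => gi i x (p.1 + p.2) * sg i p.2) Qm := by
    refine Integrable.of_bound (C := 1) (Measurable.aestronglyMeasurable (by fun_prop)) (.of_forall fun p => ?_)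
    rw [Real.norm_eq_abs, abs_mul]
    exact mul_le_one₀ (gi_abs _ _ _) (abs_nonneg _) (sg_abs _ _)
  have i4 : Integrable (fun p : Euc d × Euc d => gi i x (p.1 - p.2) * sg i (-p.2)) Qm := by
    refine Integrable.of_bound (C := 1) (Measurable.aestronglyMeasurable (by fun_prop)) (.of_forall fun p => ?_)
    rw [Real.norm_eq_abs, abs_mul]
    exact mul_le_one₀ (gi_abs _ _ _) (abs_nonneg _) (sg_abs _ _)
  have h1 := integral_mono (i1.add i2) (i3.add i4) (fun p => cross_pt i x p.1 p.2)
  simp only [Pi.add_apply] at h1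
  rw [integral_add i1 i2, integral_add i3 i4] at h1
  have h2 := int_prod_symm (μ := convPow F n) hF (fun p : Euc d × Euc d => |gi i x (p.1 + p.2) - gi i x p.1|) (by fun_prop)
  have h3 := int_prod_symm (μ := convPow F n) hF (fun p : Euc d × Euc d => gi i x (p.1 + p.2) * sg i p.2) (by fun_prop)
  simp only [← sub_eq_add_neg] at h2 h3
  rw [← hR] at h2 h3
  rw [h2, h3] at h1
  have : 2 / Real.sqrt ((n:ℝ) + 1) = 2 * (1 / Real.sqrt ((n:ℝ) + 1)) := by ring
  rw [this]
  have : 0 ≤ 1 / Real.sqrt ((n:ℝ) + 1) := by positivity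
  linarith

lemma orth_ind_diff (x a b : Euc d) :
    |(orth x).indicator (1 : Euc d → ℝ) a - (orth x).indicator 1 b| ≤ ∑ i, |gi i x a - gi i x b| := by
  classical
  by_cases h : ∀ i, gi i x a = gi i x b
  · have : a ∈ orth x ↔ b ∈ orth x := by
      simp only [orth, Set.mem_ofPred_eq]
      refine forall_congr' fun i => ?_
      have := h i
      unfold gi gr at this
      split_ifs at this with h1 h2 h2
      · constructor <;> intro <;> linarith
      · norm_num at this
      · norm_num at this
      · constructor <;> intro <;> linarith
    have h0 : (orth x).indicator (1 : Euc d → ℝ) a = (orth x).indicator 1 b := by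
      by_cases hb : b ∈ orth x
      · simp [hb, this.2 hb]
      · simp [hb, mt this.1 hb]
    rw [h0]; simp
    exact Finset.sum_nonneg fun i _ => abs_nonneg _
  · push Not at h
    obtain ⟨i, hi⟩ := h
    have h1 : |gi i x a - gi i x b| = 1 := by
      unfold gi gr at *
      split_ifs at * <;> simp at *
    calc _ ≤ (1:ℝ) := by
          by_cases ha : a ∈ orth x <;> by_cases hb : b ∈ orth x <;> simp [ha, hb]
      _ = |gi i x a - gi i x b| := h1.symm
      _ ≤ _ := Finset.single_le_sum (f := fun i => |gi i x a - gi i x b|) (fun j _ => abs_nonneg _) (Finset.mem_univ i)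

lemma partA (F : Measure (Euc d)) [IsProbabilityMeasure F] (hF : IsSymmMeasure F) (n : ℕ) (x : Euc d) :
    |(convPow F (n+1)).real (orth x) - (convPow F n).real (orth x)| ≤ 2 * d / Real.sqrt (n + 1) := by
  set Qm := (convPow F n).prod F with hR
  have hm : Measurable ((orth x).indicator (1 : Euc d → ℝ)) := measurable_one.indicator (measurableSet_orth x)
  have hb : ∀ y, ‖(orth x).indicator (1 : Euc d → ℝ) y‖ ≤ 1 := fun y => by
    by_cases h : y ∈ orth x <;> simp [h]
  have e1 : (convPow F (n+1)).real (orth x) = ∫ p, (orth x).indicator (1 : Euc d → ℝ) (p.1 + p.2) ∂Qm := by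
    rw [← integral_indicator_one (measurableSet_orth x)]
    simp only [convPow, mconv]
    rw [integral_map (by fun_prop) hm.aestronglyMeasurable]
  have e2 : (convPow F n).real (orth x) = ∫ p, (orth x).indicator (1 : Euc d → ℝ) p.1 ∂Qm := by
    rw [← integral_indicator_one (measurableSet_orth x)]
    have : Qm.map Prod.fst = convPow F n := by rw [hR, Measure.map_fst_prod]; simp
    conv_lhs => rw [← this]
    rw [integral_map (by fun_prop) hm.aestronglyMeasurable]
  have i1 : Integrable (fun p : Euc d × Euc d => (orth x).indicator (1 : Euc d → ℝ) (p.1 + p.2)) Qm :=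
    Integrable.of_bound (C := 1) (Measurable.aestronglyMeasurable (by fun_prop)) (.of_forall fun p => hb _)
  have i2 : Integrable (fun p : Euc d × Euc d => (orth x).indicator (1 : Euc d → ℝ) p.1) Qm :=
    Integrable.of_bound (C := 1) (Measurable.aestronglyMeasurable (by fun_prop)) (.of_forall fun p => hb _)
  have i3 : ∀ i, Integrable (fun p : Euc d × Euc d => |gi i x (p.1 + p.2) - gi i x p.1|) Qm := by
    intro i
    have hgm := gi_meas i x
    refine Integrable.of_bound (C := 2) (Measurable.aestronglyMeasurable (by fun_prop)) (.of_forall fun p => ?_)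
    rw [Real.norm_eq_abs, abs_abs]
    have := abs_sub (gi i x (p.1 + p.2)) (gi i x p.1)
    have := gi_abs i x (p.1 + p.2); have := gi_abs i x (p.1); linarith
  rw [e1, e2, ← integral_sub i1 i2]
  calc _ ≤ ∫ p, |(orth x).indicator (1 : Euc d → ℝ) (p.1 + p.2) - (orth x).indicator (1 : Euc d → ℝ) p.1| ∂Qm :=
        abs_integral_le_integral_abs
    _ ≤ ∫ p, ∑ i, |gi i x (p.1 + p.2) - gi i x p.1| ∂Qm :=
        integral_mono (i1.sub i2).abs (integrable_finsetSum _ fun i _ => i3 i) fun p => orth_ind_diff x _ _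
    _ = ∑ i, ∫ p, |gi i x (p.1 + p.2) - gi i x p.1| ∂Qm := integral_finsetSum _ fun i _ => i3 i
    _ ≤ ∑ i : Fin d, 2 / Real.sqrt (n + 1) := Finset.sum_le_sum fun i _ => cross_bound F hF n i x
    _ = _ := by simp; ring

end St6

end

noncomputable section
namespace St6

def Dl (σ : ℕ) (u : ℕ → ℝ) : ℕ → ℝ := fun t => u (t + σ) - u t
def Pl (σ : ℕ) (u : ℕ → ℝ) : ℕ → ℝ := fun t => u (t + σ) + u t

lemma Dl_two (σ : ℕ) : Dl (2 * σ) = Pl σ ∘ Dl σ := by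
  funext u t
  simp only [Dl, Pl, Function.comp]
  rw [show t + σ + σ = t + 2 * σ by ring]; ring

lemma Pl_Dl_comm (σ : ℕ) : Function.Commute (Pl σ) (Dl σ) := by
  intro u; funext t
  simp only [Dl, Pl]; ring

lemma Pl_iter_bound (σ n : ℕ) (v : ℕ → ℝ) (E : ℝ) (h : ∀ t, n ≤ t → |Dl σ v t| ≤ E) (j : ℕ) :
    ∀ t, n ≤ t → |(Pl σ)^[j] v t - 2 ^ j * v t| ≤ j * 2 ^ j * E := by
  have hE : 0 ≤ E := (abs_nonneg _).trans (h n le_rfl)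
  induction j with
  | zero => intro t ht; simp
  | succ j ih =>
    intro t ht
    rw [Function.iterate_succ_apply']
    have h1 := ih t ht
    have h2 := ih (t + σ) (by omega)
    have h3 := h t ht
    simp only [Pl, Dl] at *
    have e : (Pl σ)^[j] v (t + σ) + (Pl σ)^[j] v t - 2 ^ (j+1) * v t =
      ((Pl σ)^[j] v (t + σ) - 2 ^ j * v (t + σ)) + ((Pl σ)^[j] v t - 2 ^ j * v t)
        + 2 ^ j * (v (t + σ) - v t) := by ring
    have e' := abs_add_three ((Pl σ)^[j] v (t + σ) - 2 ^ j * v (t + σ)) ((Pl σ)^[j] v t - 2 ^ j * v t)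
        (2 ^ j * (v (t + σ) - v t))
    have h4 : |(2:ℝ) ^ j * (v (t + σ) - v t)| ≤ 2 ^ j * E := by
      rw [abs_mul, abs_of_pos (by positivity)]; gcongr
    have : (0:ℝ) ≤ 2 ^ j * E := by positivity
    have e2 : ((j + 1 : ℕ) : ℝ) * 2 ^ (j+1) * E = j * 2 ^ j * E + j * 2 ^ j * E + 2 ^ j * E + 2 ^ j * E := by
      push_cast; ring
    unfold Pl at *
    rw [e2, e]
    linarith

lemma step_bound (σ n j : ℕ) (u : ℕ → ℝ) (E : ℝ) (h : ∀ t, n ≤ t → |(Dl σ)^[j+1] u t| ≤ E) :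
    ∀ t, n ≤ t → |(Dl σ)^[j] u t| ≤ (1/2)^j * |(Dl (2*σ))^[j] u t| + j * E := by
  intro t ht
  have h1 := Pl_iter_bound σ n ((Dl σ)^[j] u) E (by
    intro t ht; have := h t ht; rwa [Function.iterate_succ_apply'] at this) j t ht
  have h2 : (Dl (2*σ))^[j] u = (Pl σ)^[j] ((Dl σ)^[j] u) := by
    rw [Dl_two, (Pl_Dl_comm σ).comp_iterate]; rfl
  rw [h2]
  set a := (Pl σ)^[j] ((Dl σ)^[j] u) t
  set b := (Dl σ)^[j] u t
  have h3 : |2 ^ j * b| ≤ |a| + j * 2 ^ j * E := by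
    have := abs_sub_abs_le_abs_sub (2^j * b) a
    rw [abs_sub_comm] at this
    linarith
  rw [abs_mul, abs_of_pos (by positivity : (0:ℝ) < 2 ^ j)] at h3
  have h4 : (1/2:ℝ)^j * 2^j = 1 := by rw [← mul_pow]; norm_num
  calc |b| = (1/2)^j * (2^j * |b|) := by rw [← mul_assoc, h4, one_mul]
    _ ≤ (1/2)^j * (|a| + j * 2 ^ j * E) := by gcongr
    _ = (1/2)^j * |a| + ((1/2)^j * 2^j) * (j * E) := by ring
    _ = _ := by rw [h4, one_mul]

lemma Dl_iter_triv (σ : ℕ) (u : ℕ → ℝ) (hu : ∀ t, |u t| ≤ 1) (j : ℕ) : ∀ t, |(Dl σ)^[j] u t| ≤ 2 ^ j := by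
  induction j with
  | zero => simpa using hu
  | succ j ih =>
    intro t
    rw [Function.iterate_succ_apply']
    have := abs_sub ((Dl σ)^[j] u (t+σ)) ((Dl σ)^[j] u t)
    have := ih t; have := ih (t+σ)
    simp only [Dl] at *
    rw [pow_succ]; linarith

lemma w_step {w A : ℝ} (hw : 0 ≤ w) (hA : 0 ≤ A) : 
    (1/4) * (A * ((2*w) * Real.sqrt (2*w))) ≤ (3/4) * (A * (w * Real.sqrt w)) := by
  have h2 : Real.sqrt (2*w) = Real.sqrt 2 * Real.sqrt w := Real.sqrt_mul (by norm_num) w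
  have h3 : Real.sqrt 2 ≤ 3/2 := by rw [Real.sqrt_le_left (by norm_num)]; norm_num
  rw [h2]
  have : 0 ≤ A * (w * Real.sqrt w) := by positivity
  nlinarith

lemma marchaud_high (n : ℕ) (hn : 0 < n) (u : ℕ → ℝ) (hu : ∀ t, |u t| ≤ 1) (j : ℕ) (hj : 2 ≤ j) (C : ℝ)
    (hC : 0 ≤ C)
    (h : ∀ σ t, Even σ → 0 < σ → n ≤ t → |(Dl σ)^[j+1] u t| ≤ C * ((σ / n : ℝ) * Real.sqrt (σ / n))) :
    ∀ σ t, Even σ → 0 < σ → n ≤ t →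
      |(Dl σ)^[j] u t| ≤ (2 ^ j + 4 * j * C) * ((σ / n : ℝ) * Real.sqrt (σ / n)) := by
  have hn' : (0:ℝ) < n := by exact_mod_cast hn
  have main : ∀ J σ t, n ≤ 2 ^ J * σ → Even σ → 0 < σ → n ≤ t →
      |(Dl σ)^[j] u t| ≤ (2 ^ j + 4 * j * C) * ((σ / n : ℝ) * Real.sqrt (σ / n)) := by
    intro J
    induction J with
    | zero =>
      intro σ t h1 h2 h3 h4
      have hw : (1:ℝ) ≤ σ / n := by
        rw [le_div_iff₀ hn', one_mul]; exact_mod_cast (by simpa using h1)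
      have hs : 1 ≤ Real.sqrt (σ / n) := Real.one_le_sqrt.2 hw
      calc _ ≤ (2:ℝ) ^ j := Dl_iter_triv σ u hu j t
        _ ≤ (2 ^ j + 4 * j * C) * 1 := by have : 0 ≤ 4 * j * C := by positivity
                                          linarith
        _ ≤ _ := by gcongr; nlinarith
    | succ J ih =>
      intro σ t h1 h2 h3 h4
      have i1 := ih (2*σ) t (by rw [pow_succ] at h1; linarith) (even_two_mul σ) (by omega) h4
      have i2 := step_bound σ n j u _ (fun t ht => h σ t h2 h3 ht) t h4
      set w : ℝ := σ / n with hw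
      have hw0 : 0 ≤ w := by positivity
      have : ((2 * σ : ℕ) : ℝ) / n = 2 * w := by rw [hw]; push_cast; ring
      rw [this] at i1
      set A := (2:ℝ) ^ j + 4 * j * C with hA
      have hA0 : 0 ≤ A := by positivity
      have hjA : j * (C * (w * Real.sqrt w)) ≤ (1/4) * (A * (w * Real.sqrt w)) := by
        have : j * C ≤ (1/4) * A := by
          rw [hA]; have : (0:ℝ) ≤ 2 ^ j := by positivity
          linarith
        have h0 : 0 ≤ w * Real.sqrt w := by positivity
        nlinarith [mul_le_mul_of_nonneg_right this h0]
      have h5 : (1/2:ℝ)^j ≤ 1/4 := by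
        calc (1/2:ℝ)^j ≤ (1/2)^2 := pow_le_pow_of_le_one (by norm_num) (by norm_num) hj
          _ = 1/4 := by norm_num
      have h6 : (1/2:ℝ)^j * |(Dl (2*σ))^[j] u t| ≤ (1/4) * (A * ((2*w) * Real.sqrt (2*w))) :=
        mul_le_mul h5 i1 (abs_nonneg _) (by norm_num)
      have := w_step hw0 hA0
      linarith
  intro σ t h2 h3 h4
  refine main n σ t ?_ h2 h3 h4
  have : n < 2 ^ n := Nat.lt_two_pow_self
  nlinarith

lemma marchaud_one (n : ℕ) (hn : 0 < n) (u : ℕ → ℝ) (hu : ∀ t, |u t| ≤ 1) (C : ℝ)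
    (hC : 0 ≤ C)
    (h : ∀ σ t, Even σ → 0 < σ → n ≤ t → |(Dl σ)^[2] u t| ≤ C * ((σ / n : ℝ) * Real.sqrt (σ / n))) :
    ∀ σ t, Even σ → 0 < σ → n ≤ t → |u (t + σ) - u t| ≤ (2 + 8 * C) * (σ / n : ℝ) := by
  have hn' : (0:ℝ) < n := by exact_mod_cast hn
  have main : ∀ J σ t, n ≤ 2 ^ J * σ → σ ≤ 2 * n → Even σ → 0 < σ → n ≤ t →
      |u (t + σ) - u t| ≤ (2 + 8 * C) * (σ / n : ℝ) - 4 * C * ((σ / n : ℝ) * Real.sqrt (σ / n)) := by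
    have base : ∀ σ t, n ≤ σ → σ ≤ 2 * n → 
      |u (t + σ) - u t| ≤ (2 + 8 * C) * (σ / n : ℝ) - 4 * C * ((σ / n : ℝ) * Real.sqrt (σ / n)) := by
      intro σ t h1 h0
      have hw : (1:ℝ) ≤ σ / n := by
        rw [le_div_iff₀ hn', one_mul]; exact_mod_cast h1
      have hw2 : (σ / n : ℝ) ≤ 2 := by
        rw [div_le_iff₀ hn']; exact_mod_cast h0
      have hs : Real.sqrt (σ / n) ≤ 3/2 := by
        rw [Real.sqrt_le_left (by norm_num)]; linarith
      have := abs_sub (u (t+σ)) (u t)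
      have := hu t; have := hu (t+σ)
      set w : ℝ := σ / n
      have : C * (w * Real.sqrt w) ≤ C * (w * (3/2)) := by gcongr
      have : 0 ≤ C * w := by positivity
      linarith
    intro J
    induction J with
    | zero =>
      intro σ t h1 h0 h2 h3 h4
      exact base σ t (by simpa using h1) h0
    | succ J ih =>
      intro σ t h1 h0 h2 h3 h4
      by_cases hc : n ≤ σ
      · exact base σ t hc h0
      have i1 := ih (2*σ) t (by rw [pow_succ] at h1; linarith) (by omega) (even_two_mul σ) (by omega) h4
      have i2 := step_bound σ n 1 u _ (fun t ht => h σ t h2 h3 ht) t h4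
      set w : ℝ := σ / n with hw
      have hw0 : 0 ≤ w := by positivity
      have : ((2 * σ : ℕ) : ℝ) / n = 2 * w := by rw [hw]; push_cast; ring
      rw [this] at i1
      simp only [Function.iterate_one, Dl, pow_one, Nat.cast_one, one_mul] at i2
      have h2 : Real.sqrt (2*w) = Real.sqrt 2 * Real.sqrt w := Real.sqrt_mul (by norm_num) w
      have h3 : 5/4 ≤ Real.sqrt 2 := by rw [Real.le_sqrt' (by norm_num)]; norm_num
      rw [h2] at i1
      have h5 : 0 ≤ C * (w * Real.sqrt w) := by positivity
      have h6 := mul_le_mul_of_nonneg_right h3 h5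
      nlinarith
  intro σ t h2 h3 h4
  by_cases hc : n ≤ σ
  · have hw : (1:ℝ) ≤ σ / n := by
      rw [le_div_iff₀ hn', one_mul]; exact_mod_cast hc
    have := abs_sub (u (t+σ)) (u t)
    have := hu t; have := hu (t+σ)
    set w : ℝ := σ / n
    have : 0 ≤ C * w := by positivity
    linarith
  · have := main n σ t (by
      have : n < 2 ^ n := Nat.lt_two_pow_self
      nlinarith) (by omega) h2 h3 h4
    have : 0 ≤ 4 * C * ((σ / n : ℝ) * Real.sqrt (σ / n)) := by positivity
    linarith

/-- Marchaud-type inequality. -/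
lemma marchaud (r : ℕ) (C : ℝ) (hC : 0 ≤ C) : ∃ C', 0 ≤ C' ∧ ∀ n : ℕ, 0 < n → ∀ u : ℕ → ℝ, (∀ t, |u t| ≤ 1) →
    (∀ σ t, Even σ → 0 < σ → n ≤ t → |(Dl σ)^[r+2] u t| ≤ C * ((σ / n : ℝ) * Real.sqrt (σ / n))) →
    ∀ σ t, Even σ → 0 < σ → n ≤ t → |u (t + σ) - u t| ≤ C' * (σ / n : ℝ) := by
  induction r generalizing C with
  | zero => exact ⟨2 + 8 * C, by positivity, fun n hn u hu h => marchaud_one n hn u hu C hC h⟩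
  | succ r ih =>
    obtain ⟨C', h1, h2⟩ := ih (2 ^ (r+2) + 4 * (r+2 : ℕ) * C) (by positivity)
    exact ⟨C', h1, fun n hn u hu h => h2 n hn u hu (marchaud_high n hn u hu (r+2) (by omega) C hC h)⟩

end St6

end

noncomputable section
namespace St6

lemma super_sum_lt (L : Finset ℤ) (y : ℤ → ℝ) (hpos : ∀ l ∈ L, 0 < y l)
    (h2 : ∀ l ∈ L, ∀ l' ∈ L, l < l' → 2 * y l ≤ y l') (s : Finset ℤ) :
    s ⊆ L → ∀ a ∈ L, (∀ l ∈ s, l < a) → ∑ l ∈ s, y l < y a := by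
  induction s using Finset.induction_on_max with
  | empty => intro _ a ha _; simpa using hpos a ha
  | insert m s hm ih =>
    intro hs a ha hl
    have hms : m ∉ s := fun h => lt_irrefl _ (hm m h)
    rw [Finset.sum_insert hms]
    have hmL : m ∈ L := hs (Finset.mem_insert_self _ _)
    have h1 := ih (fun x hx => hs (Finset.mem_insert_of_mem hx)) m hmL hm
    have h3 := h2 m hmL a ha (hl m (Finset.mem_insert_self _ _))
    linarith

lemma super_inj (L : Finset ℤ) (y : ℤ → ℝ) (hpos : ∀ l ∈ L, 0 < y l)
    (h2 : ∀ l ∈ L, ∀ l' ∈ L, l < l' → 2 * y l ≤ y l') (B B' : Finset ℤ) (hB : B ⊆ L) (hB' : B' ⊆ L)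
    (h : ∑ l ∈ B, y l = ∑ l ∈ B', y l) : B = B' := by
  by_contra hne
  have hS : (symmDiff B B').Nonempty := by
    rw [Finset.nonempty_iff_ne_empty]; intro h0
    exact hne (symmDiff_eq_bot.1 h0)
  wlog hm : (symmDiff B B').max' hS ∈ B \ B' generalizing B B'
  · refine this B' B hB' hB h.symm (Ne.symm hne) (by rwa [symmDiff_comm]) ?_
    have h1 := Finset.max'_mem _ hS
    rw [Finset.mem_symmDiff] at h1
    simp only [symmDiff_comm B' B]
    rw [Finset.mem_sdiff] at hm ⊢
    tauto
  set m := (symmDiff B B').max' hS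
  have h1 : ∑ l ∈ B' \ B, y l < y m := by
    refine super_sum_lt L y hpos h2 _ (Finset.sdiff_subset.trans hB') m (hB (Finset.mem_sdiff.1 hm).1) ?_
    intro l hl
    have h3 : l ∈ symmDiff B B' := by
      rw [Finset.mem_symmDiff]; right; exact Finset.mem_sdiff.1 hl
    refine lt_of_le_of_ne (Finset.le_max' _ _ h3) ?_
    rintro rfl
    exact (Finset.mem_sdiff.1 hm).2 (Finset.mem_sdiff.1 hl).1
  have h4 : y m ≤ ∑ l ∈ B \ B', y l :=
    Finset.single_le_sum (f := y) (fun l hl => (hpos l (hB (Finset.mem_sdiff.1 hl).1)).le) hm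
  have h5 := Finset.sum_sdiff_sub_sum_sdiff (f := y) (s₁ := B) (s₂ := B')
  linarith

lemma pow_count {p k t : ℕ} (ht : 1 ≤ t) (h : 2 ^ p ≤ (2 * p * t + 1) ^ k) : p ≤ 48 * k ^ 2 * t := by
  rcases Nat.eq_zero_or_pos p with rfl | hp
  · simp
  have h1 : (2:ℝ) ^ p ≤ (2 * p * t + 1 : ℝ) ^ k := by exact_mod_cast h
  have h2 := Real.log_le_log (by positivity) h1
  rw [Real.log_pow, Real.log_pow] at h2
  have hp' : (1:ℝ) ≤ p := by exact_mod_cast hp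
  have ht' : (1:ℝ) ≤ t := by exact_mod_cast ht
  have hpt : (1:ℝ) ≤ p * t := by nlinarith
  set X : ℝ := 2 * p * t + 1 with hX
  have hX0 : 0 < X := by positivity
  have h3 : Real.log X ≤ 2 * Real.sqrt X := by
    have : Real.log X = 2 * Real.log (Real.sqrt X) := by
      rw [Real.log_sqrt hX0.le]; ring
    rw [this]
    have := Real.log_le_sub_one_of_pos (Real.sqrt_pos.2 hX0)
    linarith
  have h4 := Real.log_two_gt_d9
  have h5 : (p:ℝ) / 2 ≤ 2 * k * Real.sqrt X := by
    have : (p:ℝ) / 2 ≤ p * Real.log 2 := by nlinarith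
    have : k * Real.log X ≤ k * (2 * Real.sqrt X) := by gcongr
    linarith
  have h6 : ((p:ℝ) / 2)^2 ≤ (2 * k * Real.sqrt X)^2 := by gcongr
  rw [mul_pow, Real.sq_sqrt hX0.le] at h6
  have h7 : X ≤ 3 * p * t := by rw [hX]; nlinarith
  have h8 : (2 * (k:ℝ))^2 * X ≤ (2 * (k:ℝ))^2 * (3 * p * t) := by gcongr
  have h9 : (p:ℝ) * p ≤ p * (48 * k ^ 2 * t) := by nlinarith
  have := le_of_mul_le_mul_left h9 (by linarith)
  exact_mod_cast this

lemma scale_count {ι : Type*} [Fintype ι] (e : ι → ℝ) (t : ℕ) (ht : 1 ≤ t) (L : Finset ℤ)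
    (hpar : ∀ l ∈ L, ∀ l' ∈ L, l % 2 = l' % 2)
    (v : ℤ → ι → ℤ) (hv : ∀ l ∈ L, ∀ i, |v l i| ≤ t)
    (h1 : ∀ l ∈ L, (2:ℝ) ^ l ≤ ∑ i, v l i * e i) (h2 : ∀ l ∈ L, ∑ i, v l i * e i < (2:ℝ) ^ (l+1)) :
    L.card ≤ 48 * (Fintype.card ι) ^ 2 * t := by
  classical
  apply pow_count ht
  set p := L.card
  set y : ℤ → ℝ := fun l => ∑ i, v l i * e i with hy
  have hinj : Set.InjOn (fun B : Finset ℤ => fun i => ∑ l ∈ B, v l i) (L.powerset : Set (Finset ℤ)) := by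
    intro B hB B' hB' hBB
    simp only [Finset.coe_powerset, Set.mem_preimage, Set.mem_powerset_iff, Finset.coe_subset] at hB hB'
    refine super_inj L y (fun l hl => lt_of_lt_of_le (by positivity) (h1 l hl)) ?_ B B' hB hB' ?_
    · intro l hl l' hl' hlt
      have h3 := hpar l hl l' hl'
      have h4 : l + 2 ≤ l' := by omega
      calc 2 * y l ≤ 2 * (2:ℝ)^(l+1) := by have := h2 l hl; simp only [hy]; linarith
        _ = (2:ℝ)^(l+2) := by rw [show l + 2 = (l+1) + 1 by ring, zpow_add_one₀ (by norm_num : (2:ℝ) ≠ 0) (l+1)]; ring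
        _ ≤ (2:ℝ)^l' := zpow_le_zpow_right₀ (by norm_num) h4
        _ ≤ y l' := h1 l' hl'
    · have e1 : ∀ B : Finset ℤ, ∑ l ∈ B, y l = ∑ i, ((∑ l ∈ B, v l i : ℤ) : ℝ) * e i := by
        intro B
        simp only [hy]
        rw [Finset.sum_comm]
        refine Finset.sum_congr rfl fun i _ => ?_
        push_cast
        rw [Finset.sum_mul]
      rw [e1, e1]
      refine Finset.sum_congr rfl fun i _ => ?_
      have := congrFun hBB i
      simp only at this
      rw [this]
  have hmaps : Set.MapsTo (fun B : Finset ℤ => fun i => ∑ l ∈ B, v l i) (L.powerset : Set (Finset ℤ))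
      (Fintype.piFinset (fun _ : ι => Finset.Icc (-(p*t : ℤ)) (p*t)) : Set (ι → ℤ)) := by
    intro B hB
    simp only [Finset.coe_powerset, Set.mem_preimage, Set.mem_powerset_iff, Finset.coe_subset] at hB
    simp only [Finset.mem_coe, Fintype.mem_piFinset, Finset.mem_Icc]
    intro i
    rw [← abs_le]
    calc _ ≤ ∑ l ∈ B, |v l i| := Finset.abs_sum_le_sum_abs _ _
      _ ≤ ∑ l ∈ B, (t:ℤ) := Finset.sum_le_sum fun l hl => hv l (hB hl) i
      _ = B.card * t := by simp
      _ ≤ p * t := by gcongr; exact Finset.card_le_card hB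
  have := Finset.card_le_card_of_injOn _ hmaps hinj
  rw [Finset.card_powerset, Fintype.card_piFinset] at this
  simp only [Int.card_Icc, Finset.prod_const, Finset.card_univ] at this
  convert this using 2
  have : ((p:ℤ) * t + 1 - -(p * t)) = ((2 * p * t + 1 : ℕ) : ℤ) := by push_cast; ring
  rw [this, Int.toNat_natCast]

/-- finite set of bounded-coefficients combinations -/
def combos (A : Finset ℝ) (T : ℕ) : Set ℝ := {v | ∃ c : A → ℕ, (∀ a, c a ≤ T) ∧ v = ∑ a, (c a : ℝ) * a}

lemma combos_finite (A : Finset ℝ) (T : ℕ) : (combos A T).Finite := by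
  classical
  have : combos A T ⊆ (fun c : A → Fin (T+1) => ∑ a, ((c a : ℕ) : ℝ) * a) '' Set.univ := by
    rintro v ⟨c, hc, rfl⟩
    exact ⟨fun a => ⟨c a, Nat.lt_succ_of_le (hc a)⟩, Set.mem_univ _, rfl⟩
  exact (Set.toFinite _).subset this

lemma scale_card (A : Finset ℝ) (T : ℕ) (hT : 1 ≤ T) (x : ℝ) (L : Finset ℤ)
    (hL : ∀ l ∈ L, ∃ v ∈ combos A T, (2:ℝ) ^ l ≤ x - v ∧ x - v < (2:ℝ)^(l+1)) :
    L.card ≤ 2 * (48 * (A.card + 1) ^ 2 * T) := by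
  classical
  have key : ∀ q : ℤ, (L.filter (fun l => l % 2 = q)).card ≤ 48 * (A.card + 1)^2 * T := by
    intro q
    have hL' : ∀ l : ℤ, ∃ c : A → ℕ, l ∈ L → (∀ a, c a ≤ T) ∧
        (2:ℝ) ^ l ≤ x - ∑ a, (c a : ℝ) * a ∧ x - ∑ a, (c a : ℝ) * a < (2:ℝ)^(l+1) := by
      intro l
      by_cases hl : l ∈ L
      · obtain ⟨v, ⟨c, hc, rfl⟩, h⟩ := hL l hl
        exact ⟨c, fun _ => ⟨hc, h⟩⟩
      · exact ⟨fun _ => 0, fun h => absurd h hl⟩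
    choose c hc using hL'
    have e0 : ∀ l : ℤ, ∑ i : Option A, ((Option.elim i 1 (fun a => -(c l a : ℤ)) : ℤ) : ℝ) * (Option.elim i x (fun a => (a:ℝ)))
        = x - ∑ a, (c l a : ℝ) * a := by
      intro l
      rw [Fintype.sum_option]
      simp [sub_eq_add_neg]
    have := scale_count (ι := Option A) (fun i => Option.elim i x (fun a => (a:ℝ))) T hT (L.filter (fun l => l % 2 = q))
      (fun l hl l' hl' => by rw [(Finset.mem_filter.1 hl).2, (Finset.mem_filter.1 hl').2])
      (fun l i => Option.elim i 1 (fun a => -(c l a : ℤ))) ?_ ?_ ?_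
    · simpa using this
    · intro l hl i
      have := (hc l (Finset.mem_filter.1 hl).1).1
      cases i with
      | none => simpa using hT
      | some a => simpa using this a
    · intro l hl
      rw [e0]; exact (hc l (Finset.mem_filter.1 hl).1).2.1
    · intro l hl
      rw [e0]; exact (hc l (Finset.mem_filter.1 hl).1).2.2
  have hU : L ⊆ L.filter (fun l => l % 2 = 0) ∪ L.filter (fun l => l % 2 = 1) := by
    intro l hl
    simp only [Finset.mem_union, Finset.mem_filter, hl, true_and]
    omega
  have h0 := key 0
  have h1 := key 1
  have := (Finset.card_le_card hU).trans (Finset.card_union_le _ _)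
  omega

lemma step_repr (h : ℝ → ℝ) (h1 : ∀ y ≤ 1, h y = 0) (h4 : ∀ y, 4 ≤ y → h y = 0)
    (h12 : ∀ z, 1 ≤ z → z < 2 → h z + h (2 * z) = 1)
    (A : Finset ℝ) (T : ℕ) (hT : 1 ≤ T) (x : ℝ) :
    ∃ (x' : ℝ) (L : Finset ℤ), L.card ≤ 192 * (A.card + 1)^2 * T ∧
      ∀ v ∈ combos A T, (if v ≤ x then (1:ℝ) else 0) = ∑ l ∈ L, h ((x' - v) / (2:ℝ) ^ l) := by
  classical
  have hfin := combos_finite A T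
  obtain ⟨x', hx', hgap⟩ : ∃ x', x < x' ∧ ∀ v ∈ combos A T, v ≤ x' → v ≤ x := by
    set W := hfin.toFinset.filter (fun v => x < v) with hW
    by_cases hne : W.Nonempty
    · have hm := Finset.min'_mem W hne
      have hm' : x < W.min' hne := (Finset.mem_filter.1 hm).2
      refine ⟨(x + W.min' hne) / 2, by linarith, fun v hv hle => ?_⟩
      by_contra hlt
      push Not at hlt
      have := Finset.min'_le W v (by simp [hW, hv, hlt])
      linarith
    · refine ⟨x + 1, by linarith, fun v hv _ => ?_⟩
      by_contra hlt
      push Not at hlt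
      exact hne ⟨v, by simp [hW, hv, hlt]⟩
  set L0 : Finset ℤ := (hfin.toFinset.filter (fun v => v < x')).image (fun v => Int.log 2 (x' - v)) with hL0
  have hlog : ∀ v, v < x' → (2:ℝ) ^ (Int.log 2 (x' - v)) ≤ x' - v ∧ x' - v < (2:ℝ) ^ (Int.log 2 (x' - v) + 1) := by
    intro v hv
    have h1 := Int.zpow_log_le_self (b := 2) (by norm_num) (sub_pos.2 hv)
    have h2 := Int.lt_zpow_succ_log_self (b := 2) (by norm_num) (x' - v)
    exact ⟨by exact_mod_cast h1, by exact_mod_cast h2⟩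
  have hc := scale_card A T hT x' L0 (by
    intro l hl
    simp only [hL0, Finset.mem_image, Finset.mem_filter, Set.Finite.mem_toFinset] at hl
    obtain ⟨v, ⟨hv, hvx⟩, rfl⟩ := hl
    exact ⟨v, hv, hlog v hvx⟩)
  refine ⟨x', L0 ∪ L0.image (fun l => l - 1), ?_, ?_⟩
  · have := Finset.card_union_le L0 (L0.image (fun l => l - 1))
    have h2 : (L0.image (fun l => l - 1)).card ≤ L0.card := Finset.card_image_le
    linarith
  · intro v hv
    by_cases hvx : v < x'
    · have hvx' : v ≤ x := hgap v hv hvx.le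
      rw [if_pos hvx']
      set l := Int.log 2 (x' - v) with hl
      have hlL : l ∈ L0 := by
        simp only [hL0, Finset.mem_image, Finset.mem_filter, Set.Finite.mem_toFinset]
        exact ⟨v, ⟨hv, hvx⟩, rfl⟩
      obtain ⟨g1, g2⟩ := hlog v hvx
      rw [← hl] at g1 g2
      set y := x' - v
      have hsub : ({l, l - 1} : Finset ℤ) ⊆ L0 ∪ L0.image (fun l => l - 1) := by
        intro a ha
        simp only [Finset.mem_insert, Finset.mem_singleton] at ha
        rcases ha with rfl | rfl
        · exact Finset.mem_union_left _ hlL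
        · exact Finset.mem_union_right _ (Finset.mem_image_of_mem _ hlL)
      rw [← Finset.sum_subset hsub, Finset.sum_pair (by omega)]
      · have hz : (0:ℝ) < 2 ^ l := by positivity
        have e : y / (2:ℝ)^(l-1) = 2 * (y / 2 ^ l) := by
          rw [zpow_sub_one₀ (by norm_num : (2:ℝ) ≠ 0)]; field_simp
        rw [e, h12]
        · rwa [le_div_iff₀ hz, one_mul]
        · rw [div_lt_iff₀ hz]; rw [zpow_add_one₀ (by norm_num : (2:ℝ) ≠ 0)] at g2; linarith
      · intro a _ ha
        simp only [Finset.mem_insert, Finset.mem_singleton, not_or] at ha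
        have hz : (0:ℝ) < 2 ^ a := by positivity
        rcases lt_or_ge a l with hal | hal
        · apply h4
          have : a + 2 ≤ l := by omega
          rw [le_div_iff₀ hz]
          calc (4:ℝ) * 2 ^ a = 2 ^ (a + 2) := by rw [zpow_add₀ (by norm_num : (2:ℝ) ≠ 0)]; norm_num; ring
            _ ≤ 2 ^ l := zpow_le_zpow_right₀ (by norm_num) this
            _ ≤ y := g1
        · apply h1
          have : l + 1 ≤ a := by omega
          rw [div_le_iff₀ hz, one_mul]
          exact g2.le.trans (zpow_le_zpow_right₀ (by norm_num) this)
    · have : ¬ v ≤ x := by intro h; linarith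
      rw [if_neg this]
      symm
      refine Finset.sum_eq_zero fun l _ => h1 _ ?_
      have hz : (0:ℝ) < 2 ^ l := by positivity
      rw [div_le_iff₀ hz]
      linarith

end St6

end

noncomputable section
namespace St6

section quant1
variable (G : Measure ℝ) [IsProbabilityMeasure G] (N : ℕ)

def key (y : ℝ) : ℕ × ℕ := (⌊N * G.real (Set.Iic y)⌋₊, ⌊N * G.real (Set.Iio y)⌋₊)

lemma key_mono : Monotone (key G N) := by
  intro a b hab
  have h1 : G.real (Set.Iic a) ≤ G.real (Set.Iic b) := measureReal_mono (Set.Iic_subset_Iic.2 hab)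
  have h2 : G.real (Set.Iio a) ≤ G.real (Set.Iio b) := measureReal_mono (Set.Iio_subset_Iio hab)
  exact ⟨Nat.floor_mono (by gcongr), Nat.floor_mono (by gcongr)⟩

lemma key_meas : Measurable (key G N) := by
  have h1 : Monotone (fun y => (key G N y).1) := fun a b h => (key_mono G N h).1
  have h2 : Monotone (fun y => (key G N y).2) := fun a b h => (key_mono G N h).2
  exact h1.measurable.prodMk h2.measurable

lemma key_class (hN : 0 < N) {a b : ℝ} (hab : a ≤ b) (h : key G N a = key G N b) :
    G (Set.Ioc a b) ≤ ENNReal.ofReal (1 / N) ∧ G (Set.Ico a b) ≤ ENNReal.ofReal (1 / N) := by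
  have hN' : (0:ℝ) < N := by exact_mod_cast hN
  have h1 : ⌊N * G.real (Set.Iic a)⌋₊ = ⌊N * G.real (Set.Iic b)⌋₊ := congrArg Prod.fst h
  have h2 : ⌊N * G.real (Set.Iio a)⌋₊ = ⌊N * G.real (Set.Iio b)⌋₊ := congrArg Prod.snd h
  have gen : ∀ p q : ℝ, 0 ≤ p → ⌊N * p⌋₊ = ⌊N * q⌋₊ → q - p ≤ 1 / N := by
    intro p q hp h
    have g1 := Nat.floor_le (mul_nonneg hN'.le hp)
    have g2 := Nat.lt_floor_add_one (N * q)
    rw [h] at g1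
    rw [le_div_iff₀ hN']
    nlinarith
  constructor
  · rw [← ofReal_measureReal]
    apply ENNReal.ofReal_le_ofReal
    have : Set.Ioc a b = Set.Iic b \ Set.Iic a := by ext; simp
    rw [this, measureReal_sdiff (Set.Iic_subset_Iic.2 hab) measurableSet_Iic]
    exact gen _ _ measureReal_nonneg h1
  · rw [← ofReal_measureReal]
    apply ENNReal.ofReal_le_ofReal
    have : Set.Ico a b = Set.Iio b \ Set.Iio a := by ext; simp
    rw [this, measureReal_sdiff (Set.Iio_subset_Iio hab) measurableSet_Iio]
    exact gen _ _ measureReal_nonneg h2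

lemma le_of_compact {I : Set ℝ} (hI : MeasurableSet I) {ε : ℝ≥0∞}
    (h : ∀ a ∈ I, ∀ b ∈ I, a ≤ b → G (Set.Icc a b) ≤ ε) : G I ≤ ε := by
  rw [hI.measure_eq_iSup_isCompact]
  refine iSup_le fun C => iSup_le fun hC => iSup_le fun hCc => ?_
  rcases C.eq_empty_or_nonempty with rfl | hne
  · simp
  obtain ⟨a, ha⟩ := hCc.exists_isLeast hne
  obtain ⟨b, hb⟩ := hCc.exists_isGreatest hne
  have hsub : C ⊆ Set.Icc a b := fun y hy => ⟨ha.2 hy, hb.2 hy⟩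
  exact (measure_mono hsub).trans (h a (hC ha.1) b (hC hb.1) (ha.2 hb.1))

lemma quant_one (hN : 0 < N) : ∃ ρ : ℝ → ℝ, Measurable ρ ∧ 
    (∃ A : Finset ℝ, A.card ≤ (N+1)^2 ∧ ∀ y, ρ y ∈ A) ∧
    (∀ c, G {y | ¬ (y ≤ c ↔ ρ y ≤ c)} ≤ ENNReal.ofReal (1 / N)) ∧
    (∀ c, G {y | ¬ (y < c ↔ ρ y < c)} ≤ ENNReal.ofReal (1 / N)) := by
  classical
  set rep : ℕ × ℕ → ℝ := Function.invFun (key G N) with hrep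
  have hk : ∀ y, key G N (rep (key G N y)) = key G N y := fun y =>
    Function.invFun_eq ⟨y, rfl⟩
  have hmono := key_mono G N
  have hmeas := key_meas G N
  set ρ := fun y => rep (key G N y) with hρ
  have hρm : Measurable ρ := (Measurable.of_discrete (f := rep)).comp hmeas
  have hle : ∀ a b c : ℝ, a ≤ c → c ≤ b → key G N a = key G N b → key G N c = key G N b := by
    intro a b c h1 h2 h3
    exact le_antisymm (hmono h2) (h3 ▸ hmono h1)
  have hcls : ∀ c, MeasurableSet {y | key G N y = key G N c} := fun c => hmeas (measurableSet_singleton (key G N c))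
  refine ⟨ρ, hρm, ⟨((Finset.range (N+1)) ×ˢ (Finset.range (N+1))).image rep, ?_, ?_⟩, ?_, ?_⟩
  · refine Finset.card_image_le.trans ?_
    simp [sq]
  · intro y
    refine Finset.mem_image_of_mem _ ?_
    simp only [key, Finset.mem_product, Finset.mem_range, Nat.lt_succ_iff]
    constructor <;>
    · refine Nat.floor_le_of_le ?_
      have : ∀ s, G.real s ≤ 1 := fun s => measureReal_le_one
      exact mul_le_of_le_one_right (by positivity) (this _)
  · intro c
    have hkc : ∀ y, ¬ (y ≤ c ↔ ρ y ≤ c) → key G N y = key G N c := by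
      intro y hy
      by_cases h : y ≤ c
      · have h' : c < ρ y := by by_contra h''; push Not at h''; exact hy ⟨fun _ => h'', fun _ => h⟩
        have := hle y (ρ y) c h h'.le (hk y).symm
        rw [this]; exact (hk y).symm
      · have h' : ρ y ≤ c := by by_contra h''; exact hy ⟨fun h0 => absurd h0 h, fun h0 => absurd h0 h''⟩
        push Not at h
        exact (hle (ρ y) y c h' h.le (hk y)).symm
    set z := rep (key G N c) with hz
    have hzc : key G N z = key G N c := hk c
    have hρz : ∀ y, key G N y = key G N c → ρ y = z := fun y hy => by simp only [hρ, hy, hz]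
    rcases lt_or_ge c z with hcz | hcz
    · refine (measure_mono (t := {y | key G N y = key G N c} ∩ Set.Iic c) ?_).trans ?_
      · intro y hy
        have h1 := hkc y hy
        refine ⟨h1, ?_⟩
        by_contra h2
        apply hy
        rw [hρz y h1]
        constructor
        · intro h; exact absurd h h2
        · intro h; linarith
      · refine le_of_compact G ((hcls c).inter measurableSet_Iic) ?_
        rintro a ⟨ha, ha'⟩ b ⟨hb, hb'⟩ hab
        refine (measure_mono (t := Set.Ico a z) ?_).trans (key_class G N hN ?_ ?_).2
        · intro y hy; exact ⟨hy.1, lt_of_le_of_lt (hy.2.trans hb') hcz⟩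
        · exact le_trans ha' hcz.le
        · rw [hzc]; exact ha
    · refine (measure_mono (t := {y | key G N y = key G N c} ∩ Set.Ioi c) ?_).trans ?_
      · intro y hy
        have h1 := hkc y hy
        refine ⟨h1, ?_⟩
        by_contra h2
        apply hy
        rw [hρz y h1]
        simp only [Set.mem_Ioi, not_lt] at h2
        exact ⟨fun _ => hcz, fun _ => h2⟩
      · refine le_of_compact G ((hcls c).inter measurableSet_Ioi) ?_
        rintro a ⟨ha, ha'⟩ b ⟨hb, hb'⟩ hab
        refine (measure_mono (t := Set.Ioc c b) ?_).trans (key_class G N hN ?_ ?_).1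
        · intro y hy; exact ⟨lt_of_lt_of_le ha' hy.1, hy.2⟩
        · exact le_of_lt hb'
        · exact hb.symm
  · intro c
    have hkc : ∀ y, ¬ (y < c ↔ ρ y < c) → key G N y = key G N c := by
      intro y hy
      by_cases h : y < c
      · have h' : c ≤ ρ y := by by_contra h''; push Not at h''; exact hy ⟨fun _ => h'', fun _ => h⟩
        have := hle y (ρ y) c h.le h' (hk y).symm
        rw [this]; exact (hk y).symm
      · have h' : ρ y < c := by by_contra h''; exact hy ⟨fun h0 => absurd h0 h, fun h0 => absurd h0 h''⟩
        push Not at h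
        exact (hle (ρ y) y c h'.le h (hk y)).symm
    set z := rep (key G N c) with hz
    have hzc : key G N z = key G N c := hk c
    have hρz : ∀ y, key G N y = key G N c → ρ y = z := fun y hy => by simp only [hρ, hy, hz]
    rcases le_or_gt c z with hcz | hcz
    · refine (measure_mono (t := {y | key G N y = key G N c} ∩ Set.Iio c) ?_).trans ?_
      · intro y hy
        have h1 := hkc y hy
        refine ⟨h1, ?_⟩
        by_contra h2
        apply hy
        rw [hρz y h1]
        constructor
        · intro h; exact absurd h h2
        · intro h; linarith
      · refine le_of_compact G ((hcls c).inter measurableSet_Iio) ?_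
        rintro a ⟨ha, ha'⟩ b ⟨hb, hb'⟩ hab
        refine (measure_mono (t := Set.Ico a c) ?_).trans (key_class G N hN ?_ ?_).2
        · intro y hy; exact ⟨hy.1, lt_of_le_of_lt hy.2 hb'⟩
        · exact le_of_lt ha'
        · exact ha
    · refine (measure_mono (t := {y | key G N y = key G N c} ∩ Set.Ici c) ?_).trans ?_
      · intro y hy
        have h1 := hkc y hy
        refine ⟨h1, ?_⟩
        by_contra h2
        apply hy
        rw [hρz y h1]
        simp only [Set.mem_Ici, not_le] at h2
        exact ⟨fun _ => hcz, fun _ => h2⟩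
      · refine le_of_compact G ((hcls c).inter measurableSet_Ici) ?_
        rintro a ⟨ha, ha'⟩ b ⟨hb, hb'⟩ hab
        refine (measure_mono (t := Set.Ioc z b) ?_).trans (key_class G N hN ?_ ?_).1
        · intro y hy; exact ⟨lt_of_lt_of_le hcz (le_trans ha' hy.1), hy.2⟩
        · exact hcz.le.trans hb'
        · rw [hzc]; exact hb.symm

lemma quant_odd (hN : 0 < N) : ∃ π : ℝ → ℝ, Measurable π ∧ (∀ y, π (-y) = - π y) ∧
    (∃ A : Finset ℝ, A.card ≤ 2 * (N+1)^2 + 1 ∧ ∀ y, π y ∈ A) ∧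
    (∀ c, G {y | ¬ (y ≤ c ↔ π y ≤ c)} ≤ ENNReal.ofReal (2 / N)) := by
  classical
  have hab : Measurable (fun y : ℝ => |y|) := measurable_abs
  have : IsProbabilityMeasure (G.map (fun y => |y|)) := Measure.isProbabilityMeasure_map hab.aemeasurable
  obtain ⟨ρ, hρ, ⟨A, hA, hAm⟩, h1, h2⟩ := quant_one (G.map (fun y => |y|)) N hN
  set π : ℝ → ℝ := fun y => if 0 < y then ρ |y| else if y < 0 then - ρ |y| else 0 with hπ
  have p1 : ∀ y, 0 < y → π y = ρ |y| := fun y hy => by simp [hπ, hy]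
  have p2 : ∀ y, y < 0 → π y = - ρ |y| := fun y hy => by simp [hπ, hy, not_lt.2 hy.le]
  have p3 : π 0 = 0 := by simp [hπ]
  have hms1 : ∀ c, MeasurableSet {y | ¬ (y ≤ c ↔ ρ y ≤ c)} := fun c =>
    ((measurableSet_le measurable_id measurable_const).iff (measurableSet_le hρ measurable_const)).compl
  have hms2 : ∀ c, MeasurableSet {y | ¬ (y < c ↔ ρ y < c)} := fun c =>
    ((measurableSet_lt measurable_id measurable_const).iff (measurableSet_lt hρ measurable_const)).compl
  refine ⟨π, ?_, ?_, ⟨A ∪ A.image (fun y => -y) ∪ {0}, ?_, ?_⟩, ?_⟩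
  · exact Measurable.ite (measurableSet_lt measurable_const measurable_id) (hρ.comp hab)
      (Measurable.ite (measurableSet_lt measurable_id measurable_const) (hρ.comp hab).neg measurable_const)
  · intro y
    rcases lt_trichotomy y 0 with h | h | h
    · rw [p2 y h, p1 (-y) (by linarith), abs_neg, neg_neg]
    · subst h; simp [p3]
    · rw [p1 y h, p2 (-y) (by linarith), abs_neg]
  · have g1 := Finset.card_union_le (A ∪ A.image (fun y => -y)) {0}
    have g2 := Finset.card_union_le A (A.image (fun y => -y))
    have g3 : (A.image (fun y => -y)).card ≤ A.card := Finset.card_image_le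
    simp only [Finset.card_singleton] at g1
    linarith
  · intro y
    simp only [Finset.mem_union, Finset.mem_image, Finset.mem_singleton]
    rcases lt_trichotomy y 0 with h | h | h
    · left; right; exact ⟨ρ |y|, hAm _, (p2 y h).symm⟩
    · right; rw [h, p3]
    · left; left; rw [p1 y h]; exact hAm _
  · intro c
    have g1 := h1 c
    have g2 := h2 (-c)
    rw [Measure.map_apply hab (hms1 c)] at g1
    rw [Measure.map_apply hab (hms2 (-c))] at g2
    refine (measure_mono ?_).trans ((measure_union_le _ _).trans ((add_le_add g1 g2).trans ?_))
    · intro y hy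
      simp only [Set.mem_union, Set.mem_preimage, Set.mem_ofPred_eq] at hy ⊢
      rcases lt_trichotomy y 0 with h | h | h
      · right
        rw [p2 y h] at hy
        rw [abs_of_neg h] at hy ⊢
        contrapose! hy
        rw [neg_lt_neg_iff] at hy
        constructor
        · intro h'
          by_contra h''
          push Not at h''
          have := hy.2 (by linarith)
          linarith
        · intro h'
          by_contra h''
          push Not at h''
          have := hy.1 (by linarith)
          linarith
      · subst h; rw [p3] at hy; simp at hy
      · left
        rw [p1 y h] at hy
        rw [abs_of_pos h] at hy ⊢
        exact hy
    · rw [← ENNReal.ofReal_add (by positivity) (by positivity)]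
      apply ENNReal.ofReal_le_ofReal
      apply le_of_eq; ring

end quant1

variable {d : ℕ}

lemma kolm_conv (μ ν ξ : Measure (Euc d)) [IsProbabilityMeasure μ] [IsProbabilityMeasure ν]
    [IsProbabilityMeasure ξ] (ε : ℝ) (h : ∀ x, |μ.real (orth x) - ν.real (orth x)| ≤ ε) (x : Euc d) :
    |(mconv ξ μ).real (orth x) - (mconv ξ ν).real (orth x)| ≤ ε := by
  rw [mconv_orth, mconv_orth, ← integral_sub (int_orth_sub _ _ _) (int_orth_sub _ _ _)]
  calc _ ≤ ∫ a, |μ.real (orth (x - a)) - ν.real (orth (x - a))| ∂ξ := abs_integral_le_integral_abs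
    _ ≤ ∫ a, ε ∂ξ := integral_mono ((int_orth_sub _ _ _).sub (int_orth_sub _ _ _)).abs (integrable_const _)
        fun a => h (x - a)
    _ = ε := by simp

lemma kolm_pow (μ ν : Measure (Euc d)) [IsProbabilityMeasure μ] [IsProbabilityMeasure ν]
    (ε : ℝ) (h : ∀ x, |μ.real (orth x) - ν.real (orth x)| ≤ ε) (t : ℕ) :
    ∀ x, |(convPow μ t).real (orth x) - (convPow ν t).real (orth x)| ≤ t * ε := by
  induction t with
  | zero => intro x; simp [convPow]
  | succ t ih =>
    intro x
    have h1 := kolm_conv μ ν (convPow μ t) ε h x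
    have h2 := kolm_conv (convPow μ t) (convPow ν t) ν _ ih x
    have e : ∀ ξ : Measure (Euc d), ∀ _ : IsProbabilityMeasure ξ, mconv ν ξ = mconv ξ ν := by
      intro ξ _; rw [mconv_eq, mconv_eq, Measure.conv_comm]
    rw [e _ inferInstance, e _ inferInstance] at h2
    simp only [convPow]
    have := abs_sub_le ((mconv (convPow μ t) μ).real (orth x)) ((mconv (convPow μ t) ν).real (orth x))
      ((mconv (convPow ν t) ν).real (orth x))
    push_cast
    linarith

lemma quant_multi (F : Measure (Euc d)) [IsProbabilityMeasure F] (hF : IsSymmMeasure F) (N : ℕ) (hN : 0 < N) :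
    ∃ F' : Measure (Euc d), IsProbabilityMeasure F' ∧ IsSymmMeasure F' ∧
      (∃ A : Fin d → Finset ℝ, (∀ i, (A i).card ≤ 2 * (N+1)^2 + 1) ∧ ∀ᵐ y ∂F', ∀ i, y i ∈ A i) ∧
      ∀ t x, |(convPow F t).real (orth x) - (convPow F' t).real (orth x)| ≤ t * (2 * d / N) := by
  have hev : ∀ i, Measurable (fun y : Euc d => y i) := fun i => by fun_prop
  have hex : ∀ i : Fin d, ∃ π : ℝ → ℝ, Measurable π ∧ (∀ y, π (-y) = - π y) ∧
    (∃ A : Finset ℝ, A.card ≤ 2 * (N+1)^2 + 1 ∧ ∀ y, π y ∈ A) ∧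
    (∀ c, F {y | ¬ (y i ≤ c ↔ π (y i) ≤ c)} ≤ ENNReal.ofReal (2 / N)) := by
    intro i
    have : IsProbabilityMeasure (F.map (fun y => y i)) := Measure.isProbabilityMeasure_map (hev i).aemeasurable
    obtain ⟨π, h1, h2, h3, h4⟩ := quant_odd (F.map (fun y => y i)) N hN
    refine ⟨π, h1, h2, h3, fun c => ?_⟩
    have := h4 c
    rwa [Measure.map_apply (hev i)] at this
    exact ((measurableSet_le measurable_id measurable_const).iff (measurableSet_le h1 measurable_const)).compl
  choose π hπm hodd hA hb using hex
  choose A hAc hAm using hA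
  set P : Euc d → Euc d := fun y => WithLp.toLp 2 (fun i => π i (y i)) with hP
  have hPm : Measurable P := by
    have : Measurable (fun y : Euc d => (fun i => π i (y i))) :=
      measurable_pi_lambda _ fun i => (hπm i).comp (hev i)
    exact (WithLp.measurable_toLp 2 _).comp this
  have hPi : ∀ y i, P y i = π i (y i) := fun y i => rfl
  have hpr : IsProbabilityMeasure (F.map P) := Measure.isProbabilityMeasure_map hPm.aemeasurable
  refine ⟨F.map P, hpr, ?_, ⟨A, hAc, ?_⟩, ?_⟩
  · unfold IsSymmMeasure
    conv_rhs => rw [← hF]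
    rw [Measure.map_map (by fun_prop) hPm, Measure.map_map hPm (by fun_prop)]
    congr 1
    ext y i
    simp only [Function.comp, PiLp.neg_apply, hPi, hodd]
  · rw [ae_map_iff hPm.aemeasurable]
    · exact .of_forall fun y i => by rw [hPi]; exact hAm i _
    · have : {x : Euc d | ∀ i, x i ∈ A i} = ⋂ i, (fun y : Euc d => y i) ⁻¹' (A i : Set ℝ) := by ext; simp
      rw [this]
      exact MeasurableSet.iInter fun i => hev i (A i).measurableSet
  · refine fun t => kolm_pow F (F.map P) _ (fun x => ?_) t
    rw [map_measureReal_apply hPm (measurableSet_orth x)]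
    have hms : ∀ i, MeasurableSet {y : Euc d | ¬ (y i ≤ x i ↔ π i (y i) ≤ x i)} := fun i =>
      ((measurableSet_le (hev i) measurable_const).iff (measurableSet_le ((hπm i).comp (hev i)) measurable_const)).compl
    have hB : F.real (⋃ i, {y : Euc d | ¬ (y i ≤ x i ↔ π i (y i) ≤ x i)}) ≤ 2 * d / N := by
      refine (measureReal_iUnion_fintype_le _).trans ?_
      calc _ ≤ ∑ i : Fin d, (2 / N : ℝ) := Finset.sum_le_sum fun i _ => by
            rw [measureReal_def]
            exact ENNReal.toReal_le_of_le_ofReal (by positivity) (hb i (x i))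
        _ = _ := by simp; ring
    set B := ⋃ i, {y : Euc d | ¬ (y i ≤ x i ↔ π i (y i) ≤ x i)}
    have hsame : ∀ y, y ∉ B → (y ∈ orth x ↔ y ∈ P ⁻¹' orth x) := by
      intro y hy
      simp only [B, Set.mem_iUnion, Set.mem_ofPred_eq, not_exists, not_not] at hy
      exact forall_congr' hy
    have s1 : orth x ⊆ P ⁻¹' orth x ∪ B := by
      intro y hy
      by_cases h : y ∈ B
      · exact Or.inr h
      · exact Or.inl ((hsame y h).1 hy)
    have s2 : P ⁻¹' orth x ⊆ orth x ∪ B := by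
      intro y hy
      by_cases h : y ∈ B
      · exact Or.inr h
      · exact Or.inl ((hsame y h).2 hy)
    have t1 := (measureReal_mono (μ := F) s1).trans (measureReal_union_le _ _)
    have t2 := (measureReal_mono (μ := F) s2).trans (measureReal_union_le _ _)
    rw [abs_le]; constructor <;> linarith

lemma support_combos (F : Measure (Euc d)) [IsProbabilityMeasure F] (A : Fin d → Finset ℝ)
    (hA : ∀ᵐ y ∂F, ∀ i, y i ∈ A i) (t : ℕ) : ∀ᵐ y ∂(convPow F t), ∀ i, y i ∈ combos (A i) t := by
  classical
  have hms : ∀ t, MeasurableSet {y : Euc d | ∀ i, y i ∈ combos (A i) t} := by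
    intro t
    have : {x : Euc d | ∀ i, x i ∈ combos (A i) t} = ⋂ i, (fun y : Euc d => y i) ⁻¹' (combos (A i) t) := by ext; simp
    rw [this]
    exact MeasurableSet.iInter fun i => (by fun_prop : Measurable (fun y : Euc d => y i)) (combos_finite _ _).measurableSet
  induction t with
  | zero =>
    simp only [convPow]
    rw [ae_dirac_iff (hms 0)]
    intro i
    exact ⟨fun _ => 0, by simp, by simp⟩
  | succ t ih =>
    simp only [convPow, mconv]
    rw [ae_map_iff (by fun_prop) (hms _)]
    have h1 : ∀ᵐ p ∂((convPow F t).prod F), ∀ i, p.1 i ∈ combos (A i) t :=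
      Measure.quasiMeasurePreserving_fst.ae ih
    have h2 : ∀ᵐ p ∂((convPow F t).prod F), ∀ i, p.2 i ∈ A i :=
      Measure.quasiMeasurePreserving_snd.ae hA
    filter_upwards [h1, h2] with p hp1 hp2 i
    obtain ⟨c, hc, he⟩ := hp1 i
    refine ⟨fun a => c a + if a = ⟨p.2 i, hp2 i⟩ then 1 else 0, fun a => ?_, ?_⟩
    · have := hc a
      simp only
      split_ifs <;> omega
    · simp only [PiLp.add_apply, he]
      push_cast
      simp [add_mul, Finset.sum_add_distrib]

lemma combos_mono (A : Finset ℝ) {t T : ℕ} (h : t ≤ T) : combos A t ⊆ combos A T := by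
  rintro v ⟨c, hc, rfl⟩
  exact ⟨c, fun a => (hc a).trans h, rfl⟩

end St6

end

noncomputable section
namespace St6
open FourierTransform

def hf (y : ℝ) : ℝ := Real.smoothTransition (y - 1) - Real.smoothTransition (y / 2 - 1)

lemma hf_one (y : ℝ) (hy : y ≤ 1) : hf y = 0 := by
  rw [hf, Real.smoothTransition.zero_of_nonpos (by linarith)]
  rcases le_or_gt y 2 with h | h
  · rw [Real.smoothTransition.zero_of_nonpos (by linarith)]; ring
  · linarith

lemma hf_four (y : ℝ) (hy : 4 ≤ y) : hf y = 0 := by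
  rw [hf, Real.smoothTransition.one_of_one_le (by linarith),
    Real.smoothTransition.one_of_one_le (by linarith)]; ring

lemma hf_part (z : ℝ) (h1 : 1 ≤ z) (h2 : z < 2) : hf z + hf (2 * z) = 1 := by
  rw [hf, hf, Real.smoothTransition.zero_of_nonpos (x := z / 2 - 1) (by linarith),
    Real.smoothTransition.one_of_one_le (x := 2 * z - 1) (by linarith),
    show 2 * z / 2 - 1 = z - 1 by ring]
  ring

lemma hf_smooth : ContDiff ℝ (⊤ : ℕ∞) (fun y => (hf y : ℂ)) := by
  have : ContDiff ℝ (⊤ : ℕ∞) hf := by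
    unfold hf
    exact (Real.smoothTransition.contDiff.comp (by fun_prop)).sub
      (Real.smoothTransition.contDiff.comp (by fun_prop))
  exact Complex.ofRealCLM.contDiff.comp this

lemma hf_cont : Continuous hf := by
  unfold hf
  have := Real.smoothTransition.continuous
  fun_prop

lemma hf_comp : HasCompactSupport (fun y => (hf y : ℂ)) := by
  refine HasCompactSupport.intro (K := Set.Icc 1 4) isCompact_Icc ?_
  intro x hx
  simp only [Set.mem_Icc, not_and_or, not_le] at hx
  rcases hx with h | h
  · rw [hf_one x h.le]; simp
  · rw [hf_four x h.le]; simp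

def hS : SchwartzMap ℝ ℂ := hf_comp.toSchwartzMap hf_smooth

def kf : ℝ → ℂ := ⇑(𝓕 hS : SchwartzMap ℝ ℂ)

lemma kf_int : Integrable kf := SchwartzMap.integrable (𝓕 hS : SchwartzMap ℝ ℂ)

lemma hf_eq (y : ℝ) : (hf y : ℂ) = ∫ v, Complex.exp ((2 * Real.pi * (v * y) : ℝ) * Complex.I) * kf v := by
  have h := congrArg (fun f : SchwartzMap ℝ ℂ => f y) (FourierTransform.fourierInv_fourier_eq (F := SchwartzMap ℝ ℂ) hS)
  rw [SchwartzMap.fourierInv_coe, Real.fourierInv_eq'] at h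
  have h2 : hS y = (hf y : ℂ) := rfl
  rw [← h2, ← h]
  congr 1; funext v
  simp [kf, mul_comm]

end St6

end

noncomputable section
namespace St6
variable {d : ℕ}

def KK (β v : Fin d → ℝ) : ℂ :=
  ∏ i, (Complex.exp ((2 * Real.pi * (v i * β i) : ℝ) * Complex.I) * kf (v i))

def wv (α v : Fin d → ℝ) : Euc d := WithLp.toLp 2 (fun i => 2 * Real.pi * (v i * α i))

lemma KK_int (β : Fin d → ℝ) : Integrable (KK β) := by
  refine Integrable.fintype_prod (f := fun i v => Complex.exp ((2 * Real.pi * (v * β i) : ℝ) * Complex.I) * kf v)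
    (μ := fun _ : Fin d => (volume : Measure ℝ)) ?_
  intro i
  refine kf_int.bdd_mul (c := 1) ?_ ?_
  · exact (by fun_prop : Continuous fun v : ℝ => Complex.exp ((2 * Real.pi * (v * β i) : ℝ) * Complex.I)).aestronglyMeasurable
  · exact Filter.Eventually.of_forall fun v => (Complex.norm_exp_ofReal_mul_I _).le

def Ch : ℝ := ∫ v, ‖kf v‖

lemma Ch_nonneg : 0 ≤ Ch := integral_nonneg fun _ => norm_nonneg _

lemma KK_norm_int (β : Fin d → ℝ) : ∫ v, ‖KK β v‖ = Ch ^ d := by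
  have h : ∀ v, ‖KK β v‖ = ∏ i, ‖kf (v i)‖ := by
    intro v
    simp only [KK, norm_prod, norm_mul, Complex.norm_exp_ofReal_mul_I, one_mul]
  simp_rw [h]
  rw [integral_fintype_prod_volume_eq_prod (f := fun (_ : Fin d) v => ‖kf v‖)]
  simp [Ch]

lemma wv_meas (α : Fin d → ℝ) : Continuous (wv α) := by
  unfold wv
  fun_prop

lemma prod_pt (α β : Fin d → ℝ) (S : Euc d) :
    ((∏ i, hf (α i * S i + β i) : ℝ) : ℂ) =
      ∫ v, KK β v * Complex.exp ((⟪S, wv α v⟫ : ℝ) * Complex.I) := by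
  rw [Complex.ofReal_prod]
  simp_rw [hf_eq]
  rw [← integral_fintype_prod_volume_eq_prod
    (f := fun i v => Complex.exp ((2 * Real.pi * (v * (α i * S i + β i)) : ℝ) * Complex.I) * kf v)]
  congr 1; funext v
  have hin : ⟪S, wv α v⟫ = ∑ i, 2 * Real.pi * (v i * α i) * S i := by
    simp [wv, PiLp.inner_apply]
  rw [hin, KK, Complex.ofReal_sum, Finset.sum_mul, Complex.exp_sum, ← Finset.prod_mul_distrib]
  refine Finset.prod_congr rfl fun i _ => ?_
  rw [mul_right_comm (Complex.exp _) (kf (v i)), ← Complex.exp_add]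
  congr 2
  push_cast; ring

lemma prod_int (α β : Fin d → ℝ) (μ : Measure (Euc d)) [IsProbabilityMeasure μ] :
    ((∫ S, ∏ i, hf (α i * S i + β i) ∂μ : ℝ) : ℂ) = ∫ v, KK β v * charFun μ (wv α v) := by
  rw [← integral_complex_ofReal]
  simp_rw [prod_pt, charFun_apply, ← integral_const_mul]
  rw [integral_integral_swap]
  have h1 : Integrable (fun p : Euc d × (Fin d → ℝ) => KK β p.2) (μ.prod volume) :=
    (KK_int β).comp_snd μ
  refine h1.mul_bdd (c := 1) ?_ ?_
  · have := wv_meas α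
    exact (by fun_prop : Continuous fun p : Euc d × (Fin d → ℝ) => Complex.exp ((⟪p.1, wv α p.2⟫ : ℝ) * Complex.I)).aestronglyMeasurable
  · exact Filter.Eventually.of_forall fun v => (Complex.norm_exp_ofReal_mul_I _).le

lemma charFun_convPow (F : Measure (Euc d)) [IsProbabilityMeasure F] (n : ℕ) (t : Euc d) :
    charFun (convPow F n) t = charFun F t ^ n := by
  induction n with
  | zero => simp [convPow, charFun_dirac]
  | succ n ih =>
    rw [convPow, mconv_eq, charFun_conv, ih, pow_succ]

lemma charFun_real (F : Measure (Euc d)) (hF : IsSymmMeasure F) (t : Euc d) :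
    ∃ q : ℝ, charFun F t = q := by
  have h : charFun F (-t) = charFun F t := by
    conv_rhs => rw [← hF]
    rw [charFun_apply, charFun_apply, integral_map (by fun_prop)]
    · simp
    · exact (by fun_prop : Continuous fun x : Euc d => Complex.exp ((⟪x, t⟫ : ℝ) * Complex.I)).aestronglyMeasurable
  rw [charFun_neg] at h
  exact ⟨_, (Complex.conj_eq_iff_re.1 h).symm⟩

lemma pow_bound (q : ℝ) (h0 : 0 ≤ q) (h1 : q ≤ 1) (m r : ℕ) (hm : 0 < m) :
    q ^ m * (1 - q) ^ r ≤ r.factorial / (m:ℝ) ^ r := by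
  have hm' : (0:ℝ) < m := by exact_mod_cast hm
  have e1 : q ≤ Real.exp (-(1 - q)) := by
    have := Real.add_one_le_exp (-(1 - q)); linarith
  have e2 : q ^ m ≤ Real.exp (-(m * (1 - q))) := by
    calc q ^ m ≤ Real.exp (-(1 - q)) ^ m := by gcongr
      _ = _ := by rw [← Real.exp_nat_mul]; congr 1; ring
  have e3 := Real.pow_div_factorial_le_exp (m * (1 - q)) (mul_nonneg hm'.le (by linarith)) r
  have hf : (0:ℝ) < r.factorial := by exact_mod_cast r.factorial_pos
  rw [le_div_iff₀ (by positivity)]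
  rw [div_le_iff₀ hf, mul_pow] at e3
  have hp : 0 ≤ (m:ℝ) ^ r * (1 - q) ^ r := by
    have : 0 ≤ 1 - q := by linarith
    positivity
  calc q ^ m * (1 - q) ^ r * m ^ r = q ^ m * ((m:ℝ) ^ r * (1 - q) ^ r) := by ring
    _ ≤ Real.exp (-(m * (1 - q))) * (Real.exp (m * (1 - q)) * r.factorial) := by gcongr
    _ = r.factorial := by rw [← mul_assoc, ← Real.exp_add]; simp

lemma char_sum (F : Measure (Euc d)) [IsProbabilityMeasure F] (hF : IsSymmMeasure F) (m r : ℕ)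
    (hm : 0 < m) (t : Euc d) :
    ‖∑ j ∈ Finset.range (r + 1), ((-1) ^ (r - j) * (r.choose j : ℂ)) * charFun (convPow F (2 * m + 2 * j)) t‖
      ≤ r.factorial / (m:ℝ) ^ r := by
  obtain ⟨q, hq⟩ := charFun_real F hF t
  have h1 := norm_charFun_le_one (μ := F) (t := t)
  rw [hq, Complex.norm_real, Real.norm_eq_abs] at h1
  have hs : ∑ j ∈ Finset.range (r + 1), ((-1) ^ (r - j) * (r.choose j : ℂ)) * charFun (convPow F (2 * m + 2 * j)) t
      = ((((q ^ 2) ^ m) * (q ^ 2 - 1) ^ r : ℝ) : ℂ) := by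
    simp_rw [charFun_convPow, hq]
    push_cast
    rw [sub_eq_add_neg, add_pow, Finset.mul_sum]
    refine Finset.sum_congr rfl fun j _ => ?_
    rw [pow_add, pow_mul, pow_mul]; ring
  rw [hs, Complex.norm_real, Real.norm_eq_abs, abs_mul, abs_pow (q ^ 2 - 1), abs_sub_comm]
  have hq2 : q ^ 2 ≤ 1 := (sq_le_one_iff_abs_le_one q).2 h1
  rw [abs_of_nonneg (by positivity), abs_of_nonneg (by linarith : 0 ≤ 1 - q ^ 2)]
  exact pow_bound _ (by positivity) hq2 m r hm

lemma smooth_bound (F : Measure (Euc d)) [IsProbabilityMeasure F] (hF : IsSymmMeasure F) (m r : ℕ)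
    (hm : 0 < m) (α β : Fin d → ℝ) :
    |∑ j ∈ Finset.range (r + 1), ((-1) ^ (r - j) * (r.choose j : ℝ)) *
        ∫ S, ∏ i, hf (α i * S i + β i) ∂(convPow F (2 * m + 2 * j))|
      ≤ Ch ^ d * (r.factorial / (m:ℝ) ^ r) := by
  have hInteg : ∀ μ : Measure (Euc d), IsProbabilityMeasure μ →
      Integrable (fun v => KK β v * charFun μ (wv α v)) := by
    intro μ _
    refine (KK_int β).mul_bdd (c := 1) ?_ ?_
    · exact (measurable_charFun.comp (wv_meas α).measurable).aestronglyMeasurable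
    · exact Filter.Eventually.of_forall fun v => norm_charFun_le_one _
  rw [← Real.norm_eq_abs, ← Complex.norm_real]
  push_cast
  simp_rw [prod_int, ← integral_const_mul]
  rw [← integral_finsetSum _ (fun j _ => (hInteg _ inferInstance).const_mul _)]
  rw [← KK_norm_int β, ← integral_mul_const]
  refine norm_integral_le_of_norm_le ((KK_int β).norm.mul_const _) ?_
  refine Filter.Eventually.of_forall fun v => ?_
  have := char_sum F hF m r hm (wv α v)
  have e : ∑ j ∈ Finset.range (r + 1), ((-1) ^ (r - j) * (r.choose j : ℂ)) * (KK β v * charFun (convPow F (2 * m + 2 * j)) (wv α v))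
    = KK β v * ∑ j ∈ Finset.range (r + 1), ((-1) ^ (r - j) * (r.choose j : ℂ)) * charFun (convPow F (2 * m + 2 * j)) (wv α v) := by
    rw [Finset.mul_sum]; exact Finset.sum_congr rfl fun j _ => by ring
  rw [e, norm_mul]
  gcongr

end St6

end

noncomputable section
namespace St6
variable {d : ℕ}

lemma hf_abs (y : ℝ) : |hf y| ≤ 1 := by
  have a1 := Real.smoothTransition.nonneg (y - 1)
  have a2 := Real.smoothTransition.le_one (y - 1)
  have a3 := Real.smoothTransition.nonneg (y / 2 - 1)
  have a4 := Real.smoothTransition.le_one (y / 2 - 1)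
  rw [abs_le, hf]; constructor <;> linarith

lemma prod_hf_int (α β : Fin d → ℝ) (μ : Measure (Euc d)) [IsProbabilityMeasure μ] :
    Integrable (fun S : Euc d => ∏ i, hf (α i * S i + β i)) μ := by
  refine Integrable.of_bound (C := 1) ?_ ?_
  · have := hf_cont
    exact (by fun_prop : Continuous fun S : Euc d => ∏ i, hf (α i * S i + β i)).aestronglyMeasurable
  · refine Filter.Eventually.of_forall fun S => ?_
    rw [norm_prod]
    exact Finset.prod_le_one (fun _ _ => norm_nonneg _) (fun _ _ => hf_abs _)

lemma ind_prod (x S : Euc d) :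
    (orth x).indicator (fun _ => (1:ℝ)) S = ∏ i, (if S i ≤ x i then (1:ℝ) else 0) := by
  by_cases h : S ∈ orth x
  · rw [Set.indicator_of_mem h, Finset.prod_eq_one]
    intro i _
    rw [if_pos (h i)]
  · rw [Set.indicator_of_notMem h]
    have h' : ¬ ∀ i, S i ≤ x i := h
    push Not at h'
    obtain ⟨i, hi⟩ := h'
    exact (Finset.prod_eq_zero (Finset.mem_univ i) (if_neg (not_le.2 hi))).symm

lemma orth_repr (F : Measure (Euc d)) [IsProbabilityMeasure F] (A : Fin d → Finset ℝ)
    (hA : ∀ᵐ y ∂F, ∀ i, y i ∈ A i) (T : ℕ) (hT : 1 ≤ T) (x : Euc d) :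
    ∃ (x' : Fin d → ℝ) (L : Fin d → Finset ℤ), (∀ i, (L i).card ≤ 192 * ((A i).card + 1) ^ 2 * T) ∧
      ∀ t ≤ T, (convPow F t).real (orth x) = ∑ l ∈ Fintype.piFinset L,
        ∫ S, ∏ i, hf ((-1 / (2:ℝ) ^ l i) * S i + x' i / (2:ℝ) ^ l i) ∂(convPow F t) := by
  choose x' L hL hr using fun i => step_repr hf hf_one hf_four hf_part (A i) T hT (x i)
  refine ⟨x', L, hL, fun t ht => ?_⟩
  rw [← integral_finsetSum _ (fun l _ => prod_hf_int _ _ _)]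
  have e0 : (convPow F t).real (orth x) = ∫ S, (orth x).indicator (fun _ => (1:ℝ)) S ∂(convPow F t) := by
    rw [integral_indicator (measurableSet_orth x)]; simp
  rw [e0]
  refine integral_congr_ae ?_
  filter_upwards [support_combos F A hA t] with S hS
  rw [ind_prod]
  have e1 : ∀ i, (if S i ≤ x i then (1:ℝ) else 0) = ∑ l ∈ L i, hf ((-1 / (2:ℝ) ^ l) * S i + x' i / (2:ℝ) ^ l) := by
    intro i
    rw [hr i (S i) (combos_mono _ ht (hS i))]
    refine Finset.sum_congr rfl fun l _ => ?_
    congr 1; ring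
  simp_rw [e1]
  rw [Finset.prod_univ_sum]

lemma sharp_bound (F : Measure (Euc d)) [IsProbabilityMeasure F] (hF : IsSymmMeasure F)
    (A : Fin d → Finset ℝ) (hA : ∀ᵐ y ∂F, ∀ i, y i ∈ A i) (K : ℕ) (hK : ∀ i, (A i).card ≤ K)
    (m r : ℕ) (hm : 0 < m) (x : Euc d) :
    |∑ j ∈ Finset.range (r + 1), ((-1) ^ (r - j) * (r.choose j : ℝ)) *
        (convPow F (2 * m + 2 * j)).real (orth x)|
      ≤ ((192 * (K + 1) ^ 2 * (2 * m + 2 * r) : ℕ) : ℝ) ^ d * (Ch ^ d * (r.factorial / (m:ℝ) ^ r)) := by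
  obtain ⟨x', L, hL, hr⟩ := orth_repr F A hA (2 * m + 2 * r) (by omega) x
  have e : ∑ j ∈ Finset.range (r + 1), ((-1) ^ (r - j) * (r.choose j : ℝ)) *
        (convPow F (2 * m + 2 * j)).real (orth x) = ∑ l ∈ Fintype.piFinset L,
      ∑ j ∈ Finset.range (r + 1), ((-1) ^ (r - j) * (r.choose j : ℝ)) *
        ∫ S, ∏ i, hf ((-1 / (2:ℝ) ^ l i) * S i + x' i / (2:ℝ) ^ l i) ∂(convPow F (2 * m + 2 * j)) := by
    rw [Finset.sum_comm]
    refine Finset.sum_congr rfl fun j hj => ?_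
    rw [hr _ (by have := Finset.mem_range.1 hj; omega), Finset.mul_sum]
  rw [e]
  refine (Finset.abs_sum_le_sum_abs _ _).trans ?_
  refine (Finset.sum_le_card_nsmul _ _ _ (fun l _ => smooth_bound F hF m r hm _ _)).trans ?_
  rw [nsmul_eq_mul]
  have hc : (Fintype.piFinset L).card ≤ (192 * (K + 1) ^ 2 * (2 * m + 2 * r)) ^ d := by
    rw [Fintype.card_piFinset]
    refine (Finset.prod_le_pow_card _ _ (192 * (K + 1) ^ 2 * (2 * m + 2 * r)) ?_).trans (by simp)
    intro i _
    refine (hL i).trans ?_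
    have := hK i
    gcongr
  have := Ch_nonneg
  have hc' : ((Fintype.piFinset L).card : ℝ) ≤ ((192 * (K + 1) ^ 2 * (2 * m + 2 * r) : ℕ) : ℝ) ^ d := by
    exact_mod_cast hc
  gcongr

end St6

end

noncomputable section
namespace St6

lemma comb_bound (d : ℕ) : ∃ C : ℝ, 0 ≤ C ∧ ∀ (F : Measure (Euc d)), IsProbabilityMeasure F →
    IsSymmMeasure F → ∀ (m : ℕ), 0 < m → ∀ x : Euc d,
    |∑ j ∈ Finset.range (13 * d + 2 + 1), ((-1) ^ (13 * d + 2 - j) * ((13 * d + 2).choose j : ℝ)) *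
        (convPow F (2 * m + 2 * j)).real (orth x)| ≤ C / (m:ℝ) ^ 2 := by
  generalize hr : 13 * d + 2 = r
  have hCh := Ch_nonneg
  refine ⟨(19200 * (2 + 2 * r)) ^ d * (Ch ^ d * r.factorial) + 2 ^ r * ((2 + 2 * r) * (2 * d)), by positivity, ?_⟩
  intro F _ hF m hm x
  have hm' : (0:ℝ) < m := by exact_mod_cast hm
  have hm1 : (1:ℝ) ≤ m := by exact_mod_cast hm
  obtain ⟨F', _, hF', ⟨A, hAc, hA⟩, hq⟩ := quant_multi F hF (m ^ 3) (by positivity)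
  have h1 := sharp_bound F' hF' A hA _ hAc m r hm x
  set c : ℕ → ℝ := fun j => (-1) ^ (r - j) * (r.choose j : ℝ) with hc
  have hcabs : ∀ j, |c j| = r.choose j := by
    intro j
    simp [hc, abs_mul]
  have hsum : ∑ j ∈ Finset.range (r + 1), |c j| = 2 ^ r := by
    simp_rw [hcabs]
    exact_mod_cast Nat.sum_range_choose r
  have h2 : |∑ j ∈ Finset.range (r + 1), c j * (convPow F (2 * m + 2 * j)).real (orth x)
      - ∑ j ∈ Finset.range (r + 1), c j * (convPow F' (2 * m + 2 * j)).real (orth x)| ≤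
      2 ^ r * ((2 + 2 * r) * (2 * d)) / (m:ℝ) ^ 2 := by
    rw [← Finset.sum_sub_distrib]
    refine (Finset.abs_sum_le_sum_abs _ _).trans ?_
    rw [← hsum, mul_div_assoc, Finset.sum_mul]
    refine Finset.sum_le_sum fun j hj => ?_
    rw [← mul_sub, abs_mul]
    refine mul_le_mul_of_nonneg_left ((hq _ _).trans ?_) (abs_nonneg _)
    have hj' : (j:ℝ) ≤ r := by exact_mod_cast Nat.lt_succ_iff.1 (Finset.mem_range.1 hj)
    push_cast
    have : (2 * (m:ℝ) + 2 * j) ≤ (2 + 2 * r) * m := by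
      have : (r:ℝ) ≤ r * m := le_mul_of_one_le_right (by positivity) hm1
      nlinarith
    calc (2 * (m:ℝ) + 2 * j) * (2 * d / m ^ 3) ≤ (2 + 2 * r) * m * (2 * d / m ^ 3) := by gcongr
      _ = _ := by field_simp
  have h3 : ((192 * (2 * (m ^ 3 + 1) ^ 2 + 1 + 1) ^ 2 * (2 * m + 2 * r) : ℕ) : ℝ) ^ d * (Ch ^ d * (r.factorial / (m:ℝ) ^ r))
      ≤ (19200 * (2 + 2 * r)) ^ d * (Ch ^ d * r.factorial) / (m:ℝ) ^ 2 := by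
    have hb : ((192 * (2 * (m ^ 3 + 1) ^ 2 + 1 + 1) ^ 2 * (2 * m + 2 * r) : ℕ) : ℝ) ≤ (19200 * (2 + 2 * r)) * (m:ℝ) ^ 13 := by
      push_cast
      have m3 : 1 ≤ (m:ℝ) ^ 3 := one_le_pow₀ hm1
      have i1 : 2 * ((m:ℝ) ^ 3 + 1) ^ 2 + 1 + 1 ≤ 10 * m ^ 6 := by
        have : (m:ℝ) ^ 6 = m ^ 3 * m ^ 3 := by ring
        nlinarith
      have i2 : (2 * (m:ℝ) + 2 * r) ≤ (2 + 2 * r) * m := by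
        have : (r:ℝ) ≤ r * m := le_mul_of_one_le_right (by positivity) hm1
        nlinarith
      calc _ ≤ 192 * (10 * (m:ℝ) ^ 6) ^ 2 * ((2 + 2 * r) * m) := by gcongr
        _ = _ := by ring
    calc _ ≤ ((19200 * (2 + 2 * r)) * (m:ℝ) ^ 13) ^ d * (Ch ^ d * (r.factorial / (m:ℝ) ^ r)) := by gcongr
      _ = _ := by
        rw [mul_pow, ← pow_mul, ← hr, pow_add]
        field_simp
  have h4 := abs_sub_abs_le_abs_sub (∑ j ∈ Finset.range (r + 1), c j * (convPow F (2 * m + 2 * j)).real (orth x)) (∑ j ∈ Finset.range (r + 1), c j * (convPow F' (2 * m + 2 * j)).real (orth x))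
  rw [add_div]
  have h5 := h1.trans h3
  linarith

variable {d : ℕ}

lemma comb_conv (μ : ℕ → Measure (Euc d)) [∀ j, IsProbabilityMeasure (μ j)] (ξ : Measure (Euc d))
    [IsProbabilityMeasure ξ] (s : Finset ℕ) (c : ℕ → ℝ) (ε : ℝ)
    (h : ∀ x, |∑ j ∈ s, c j * (μ j).real (orth x)| ≤ ε) (x : Euc d) :
    |∑ j ∈ s, c j * (mconv ξ (μ j)).real (orth x)| ≤ ε := by
  simp_rw [mconv_orth, ← integral_const_mul]
  have hi : ∀ j ∈ s, Integrable (fun a => c j * (μ j).real (orth (x - a))) ξ :=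
    fun j _ => (int_orth_sub _ _ _).const_mul _
  rw [← integral_finsetSum _ hi]
  calc _ ≤ ∫ a, |∑ j ∈ s, c j * (μ j).real (orth (x - a))| ∂ξ := abs_integral_le_integral_abs
    _ ≤ ∫ a, ε ∂ξ := integral_mono (integrable_finsetSum _ hi).abs (integrable_const _) fun a => h (x - a)
    _ = ε := by simp

lemma Dl_eq (σ r : ℕ) (u : ℕ → ℝ) (t : ℕ) :
    (Dl σ)^[r] u t = ∑ j ∈ Finset.range (r + 1), ((-1) ^ (r - j) * (r.choose j : ℝ)) * u (t + j * σ) := by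
  have h := fwdDiff_iter_eq_sum_shift (h := σ) u r t
  have e : Dl σ = fwdDiff σ := rfl
  rw [e, h]
  refine Finset.sum_congr rfl fun j _ => ?_
  rw [zsmul_eq_mul, smul_eq_mul]; push_cast; rfl

lemma diff_bound (d : ℕ) : ∃ C : ℝ, 0 ≤ C ∧ ∀ (F : Measure (Euc d)), IsProbabilityMeasure F →
    IsSymmMeasure F → ∀ (x : Euc d) (n : ℕ), 0 < n → ∀ σ t : ℕ, Even σ → 0 < σ → n ≤ t →
      |(Dl σ)^[13 * d + 2] (fun t => (convPow F t).real (orth x)) t| ≤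
        C * ((σ / n : ℝ) * Real.sqrt (σ / n)) := by
  obtain ⟨C, hC, hb⟩ := comb_bound d
  refine ⟨4 * C + 2 ^ (13 * d + 2), by positivity, ?_⟩
  intro F _ hF x n hn σ t hσe hσ hnt
  have hn' : (0:ℝ) < n := by exact_mod_cast hn
  have hσ' : (0:ℝ) < σ := by exact_mod_cast hσ
  rcases lt_or_ge n σ with hlt | hge
  · have h1 : (1:ℝ) ≤ σ / n := by
      rw [le_div_iff₀ hn', one_mul]; exact_mod_cast hlt.le
    have h2 : 1 ≤ Real.sqrt (σ / n) := by rw [Real.one_le_sqrt]; exact h1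
    have h3 : 1 ≤ (σ / n : ℝ) * Real.sqrt (σ / n) := one_le_mul_of_one_le_of_one_le h1 h2
    refine (Dl_iter_triv σ _ (fun t => ?_) _ t).trans ?_
    · rw [abs_of_nonneg measureReal_nonneg]; exact measureReal_le_one
    · have : (0:ℝ) ≤ 2 ^ (13 * d + 2) := by positivity
      nlinarith
  · obtain ⟨s, hs⟩ := hσe
    have hs0 : 0 < s := by omega
    set M := n / σ with hM
    have hM0 : 0 < M := Nat.div_pos hge hσ
    have hMn : M * σ ≤ n := Nat.div_mul_le_self n σ
    have hnM : n < (M + 1) * σ := by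
      have := Nat.lt_div_mul_add (a := n) hσ
      rw [add_mul, one_mul]; exact this
    obtain ⟨e, he⟩ := Nat.exists_eq_add_of_le (hMn.trans hnt)
    have : IsProbabilityMeasure (convPow F s) := inferInstance
    have key := comb_conv (fun j => convPow (convPow F s) (2 * M + 2 * j)) (convPow F e)
      (Finset.range (13 * d + 2 + 1)) (fun j => (-1) ^ (13 * d + 2 - j) * ((13 * d + 2).choose j : ℝ)) _
      (fun x => hb (convPow F s) inferInstance (convPow_symm hF s) M hM0 x) x
    rw [Dl_eq]
    have e1 : ∀ j, mconv (convPow F e) (convPow (convPow F s) (2 * M + 2 * j)) = convPow F (t + j * σ) := by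
      intro j
      rw [convPow_mul, ← convPow_add]
      congr 1; rw [he, hs]; ring
    simp only [e1] at key
    refine key.trans ?_
    have hM0' : (0:ℝ) < M := by exact_mod_cast hM0
    have hM1' : (1:ℝ) ≤ M := by exact_mod_cast hM0
    set y : ℝ := σ / n with hy
    have hy0 : 0 < y := by positivity
    have hy1 : y ≤ 1 := by
      rw [hy, div_le_one hn']; exact_mod_cast hge
    have hMy : 1 ≤ 2 * M * y := by
      have : (n:ℝ) ≤ (M + 1) * σ := by exact_mod_cast hnM.le
      rw [hy, mul_div_assoc', le_div_iff₀ hn']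
      nlinarith
    have h1 : C / (M:ℝ) ^ 2 ≤ 4 * C * (y * y) := by
      rw [div_le_iff₀ (by positivity)]
      have : 1 ≤ (2 * M * y) * (2 * M * y) := one_le_mul_of_one_le_of_one_le hMy hMy
      nlinarith
    have h2 : y ≤ Real.sqrt y := by
      apply Real.le_sqrt_of_sq_le; nlinarith
    have h3 : y * y ≤ y * Real.sqrt y := by gcongr
    have h4 : (0:ℝ) ≤ 2 ^ (13 * d + 2) * (y * Real.sqrt y) := by positivity
    have h5 : 4 * C * (y * y) ≤ 4 * C * (y * Real.sqrt y) := by gcongr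
    linarith

lemma even_bound (d : ℕ) : ∃ C : ℝ, 0 ≤ C ∧ ∀ (F : Measure (Euc d)), IsProbabilityMeasure F →
    IsSymmMeasure F → ∀ (x : Euc d) (n : ℕ), 0 < n → ∀ σ t : ℕ, Even σ → 0 < σ → n ≤ t →
      |(convPow F (t + σ)).real (orth x) - (convPow F t).real (orth x)| ≤ C * (σ / n : ℝ) := by
  obtain ⟨C, hC, hb⟩ := diff_bound d
  obtain ⟨C', hC', hm⟩ := marchaud (13 * d) C hC
  refine ⟨C', hC', ?_⟩
  intro F hp hF x n hn
  refine hm n hn (fun t => (convPow F t).real (orth x)) (fun t => ?_) (hb F hp hF x n hn)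
  rw [abs_of_nonneg measureReal_nonneg]; exact measureReal_le_one

end St6

end

theorem stmt6 :
    ∃ c : ℝ, 0 < c ∧ ∃ C : ℕ → ℝ, (∀ d, 0 < C d) ∧
      ∀ (d k n : ℕ), 0 < d → 0 < k → 0 < n →
        ∀ F : Measure (Euc d), IsProbabilityMeasure F → IsSymmMeasure F →
          kolmDist (convPow F n) (convPow F (n + 2 * k + 1)) ≤
            c * d / Real.sqrt n + C d * k * (n : ℝ)⁻¹ := by
  choose C' hC' hb using St6.even_bound
  refine ⟨2, by norm_num, fun d => 2 * C' d + 1, fun d => by have := hC' d; linarith, ?_⟩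
  intro d k n _ hk hn F hp hF
  have hn' : (0:ℝ) < n := by exact_mod_cast hn
  have hC := hC' d
  refine ciSup_le fun x => ?_
  change |(convPow F n).real (St6.orth x) - (convPow F (n + 2 * k + 1)).real (St6.orth x)| ≤ _
  have h1 := St6.partA F hF n x
  have h2 := hb d F hp hF x n hn (2 * k) (n + 1) (even_two_mul k) (by omega) (by omega)
  rw [show n + 1 + 2 * k = n + 2 * k + 1 by ring] at h2
  have h3 : 2 * (d:ℝ) / Real.sqrt (n + 1) ≤ 2 * d / Real.sqrt n := by
    have : 0 < Real.sqrt n := Real.sqrt_pos.2 hn'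
    gcongr
    linarith
  have h4 : C' d * (((2 * k : ℕ) : ℝ) / n) ≤ (2 * C' d + 1) * k * (n:ℝ)⁻¹ := by
    have e : C' d * (((2 * k : ℕ) : ℝ) / n) = 2 * C' d * (k * (n:ℝ)⁻¹) := by
      push_cast; rw [div_eq_mul_inv]; ring
    have : 0 ≤ (k:ℝ) * (n:ℝ)⁻¹ := by positivity
    rw [e]; nlinarith
  rw [abs_le] at h1 h2 ⊢
  constructor <;> linarith [h1.1, h1.2, h2.1, h2.2]
end
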